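/- Let A be a finitely generated commutative unital ℝ-algebra, let I be an ideal of A, and let L : A → ℝ be a linear functional such that L(a²) ≥ 0 for all a ∈ A and L(b) = 0 for all b ∈ I. If f ∈ A satisfies χ(f) = 0 for every unital ℝ-algebra homomorphism χ : A → ℝ that vanishes on I, then L(f) = 0. In particular, a linear functional on A that is nonnegative on all squares and vanishes on I also vanishes on the ideal Î := {f ∈ A : χ(f) = 0 for every character χ vanishing on I}. -/

import Mathlib

section PartA
open Polynomial
noncomputable def ptr {V : Type*} [CommRing V] (m p : V[X]) : V :=
  ((p * derivative m) %ₘ m).coeff (m.natDegree - 1)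

lemma ptr_map {V W : Type*} [CommRing V] [CommRing W] [Nontrivial W] (f : V →+* W) {m : V[X]}
    (hm : m.Monic) (p : V[X]) : f (ptr m p) = ptr (m.map f) (p.map f) := by
  unfold ptr
  rw [hm.natDegree_map, derivative_map, ← Polynomial.map_mul, ← Polynomial.map_modByMonic f hm,
    coeff_map]

lemma ptr_add {V : Type*} [CommRing V] (m p q : V[X]) : ptr m (p + q) = ptr m p + ptr m q := by
  simp [ptr, add_mul, add_modByMonic]

lemma ptr_smul {V : Type*} [CommRing V] (m p : V[X]) (c : V) : ptr m (c • p) = c * ptr m p := by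
  simp [ptr, smul_modByMonic]

lemma ptr_zero {V : Type*} [CommRing V] (m : V[X]) : ptr m 0 = 0 := by
  simp [ptr]

lemma ptr_mul_self {V : Type*} [CommRing V] {m : V[X]} (hm : m.Monic) (h : V[X]) :
    ptr m (m * h) = 0 := by
  have : (m * h * derivative m) %ₘ m = 0 := by
    rw [mul_assoc]; exact (modByMonic_eq_zero_iff_dvd hm).2 (dvd_mul_right _ _)
  simp [ptr, this]

lemma ptr_one_left {V : Type*} [CommRing V] (p : V[X]) : ptr 1 p = 0 := by
  simp [ptr]

lemma ptr_mul {V : Type*} [CommRing V] [Nontrivial V] {m₁ m₂ : V[X]} (h₁ : m₁.Monic)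
    (h₂ : m₂.Monic) (p : V[X]) : ptr (m₁ * m₂) p = ptr m₁ p + ptr m₂ p := by
  by_cases e₁ : m₁ = 1
  · subst e₁; simp [ptr_one_left]
  by_cases e₂ : m₂ = 1
  · subst e₂; simp [ptr_one_left]
  have n₁ : 0 < m₁.natDegree := (h₁.natDegree_pos).2 e₁
  have n₂ : 0 < m₂.natDegree := (h₂.natDegree_pos).2 e₂
  have key : (p * derivative (m₁ * m₂)) %ₘ (m₁ * m₂) =
      m₂ * ((p * derivative m₁) %ₘ m₁) + m₁ * ((p * derivative m₂) %ₘ m₂) := by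
    refine (div_modByMonic_unique ((p * derivative m₁) /ₘ m₁ + (p * derivative m₂) /ₘ m₂) _
      (h₁.mul h₂) ⟨?_, ?_⟩).2
    · have a := modByMonic_add_div (p * derivative m₁) m₁
      have b := modByMonic_add_div (p * derivative m₂) m₂
      rw [derivative_mul]
      linear_combination m₂ * a + m₁ * b
    · refine lt_of_le_of_lt (degree_add_le _ _) (max_lt ?_ ?_)
      · rw [mul_comm m₁ m₂, h₁.degree_mul, mul_comm, h₂.degree_mul, add_comm]
        refine WithBot.add_lt_add_left (by simpa [degree_eq_bot] using h₂.ne_zero) (degree_modByMonic_lt _ h₁)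
      · rw [h₂.degree_mul, mul_comm, h₁.degree_mul, add_comm]
        refine WithBot.add_lt_add_left (by simpa [degree_eq_bot] using h₁.ne_zero) (degree_modByMonic_lt _ h₂)
  unfold ptr
  rw [key, h₁.natDegree_mul h₂, coeff_add]
  have r₁ := natDegree_modByMonic_lt (p * derivative m₁) h₁ e₁
  have r₂ := natDegree_modByMonic_lt (p * derivative m₂) h₂ e₂
  have c₁ : m₁.natDegree + m₂.natDegree - 1 = m₂.natDegree + (m₁.natDegree - 1) := by omega
  have c₂ : m₁.natDegree + m₂.natDegree - 1 = m₁.natDegree + (m₂.natDegree - 1) := by omega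
  congr 1
  · rw [c₁, coeff_mul_add_eq_of_natDegree_le le_rfl (by omega), h₂.coeff_natDegree, one_mul]
  · rw [c₂, coeff_mul_add_eq_of_natDegree_le le_rfl (by omega), h₁.coeff_natDegree, one_mul]

lemma ptr_lin {V : Type*} [CommRing V] [Nontrivial V] (r : V) (p : V[X]) :
    ptr (X - C r) p = p.eval r := by
  simp [ptr, modByMonic_X_sub_C_eq_C_eval]

lemma quad_monic {V : Type*} [CommRing V] [Nontrivial V] (a b : V) :
    ((X - C a) ^ 2 + C (b ^ 2)).Monic ∧ ((X - C a) ^ 2 + C (b ^ 2)).natDegree = 2 := by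
  have h : (X - C a) ^ 2 + C (b ^ 2) = X ^ 2 + (C (-2 * a) * X + C (a ^ 2 + b ^ 2)) := by
    simp only [map_add, map_mul, map_neg, map_pow, map_ofNat]; ring
  rw [h]
  have hd : (C (-2 * a) * X + C (a ^ 2 + b ^ 2) : V[X]).degree < 2 :=
    lt_of_le_of_lt degree_linear_le (by norm_num)
  constructor
  · exact monic_X_pow_add hd
  · rw [natDegree_add_eq_left_of_degree_lt] <;> simp
    simpa using hd

lemma quad_rem {V : Type*} [CommRing V] [Nontrivial V] (a b : V) (p : V[X]) :
    p %ₘ ((X - C a) ^ 2 + C (b ^ 2)) =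
      C ((p %ₘ ((X - C a) ^ 2 + C (b ^ 2))).coeff 1) * X
        + C ((p %ₘ ((X - C a) ^ 2 + C (b ^ 2))).coeff 0) := by
  refine eq_X_add_C_of_natDegree_le_one ?_
  have := natDegree_modByMonic_lt p (quad_monic a b).1 (fun h => by
    have h' := (quad_monic a b).2; rw [h] at h'; simp at h')
  rw [(quad_monic a b).2] at this; omega

lemma ptr_quad {V : Type*} [CommRing V] [Nontrivial V] (a b : V) (p : V[X]) :
    ptr ((X - C a) ^ 2 + C (b ^ 2)) (p ^ 2) =
     2 * (((p %ₘ ((X - C a) ^ 2 + C (b ^ 2))).coeff 1 * a +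
        (p %ₘ ((X - C a) ^ 2 + C (b ^ 2))).coeff 0) ^ 2
        - ((p %ₘ ((X - C a) ^ 2 + C (b ^ 2))).coeff 1 * b) ^ 2) := by
  have h1 := quad_rem a b p
  have h2 := modByMonic_add_div p ((X - C a) ^ 2 + C (b ^ 2))
  rw [h1] at h2
  generalize (p %ₘ ((X - C a) ^ 2 + C (b ^ 2))).coeff 1 = c at *
  generalize (p %ₘ ((X - C a) ^ 2 + C (b ^ 2))).coeff 0 = d at *
  generalize p /ₘ ((X - C a) ^ 2 + C (b ^ 2)) = h at *
  obtain ⟨hm, hn⟩ := quad_monic a b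
  have e : p ^ 2 * derivative ((X - C a) ^ 2 + C (b ^ 2)) =
    C (2 * ((c * a + d) ^ 2 - (c * b) ^ 2)) * X + C (2 * (-a * (c * a + d) ^ 2 + a * (c * b) ^ 2 - 2 * b ^ 2 * c * (c * a + d))) +
      ((X - C a) ^ 2 + C (b ^ 2)) * (2 * (X - C a) * (2 * (C c * X + C d) * h + ((X - C a) ^ 2 + C (b ^ 2)) * h ^ 2)
        + 2 * C c ^ 2 * (X - C a) + 4 * C c * C (c * a + d)) := by
    have hd : derivative ((X - C a) ^ 2 + C (b ^ 2)) = 2 * (X - C a) := by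
      rw [derivative_add, derivative_C, derivative_X_sub_C_sq]; simp [map_ofNat]
    rw [hd, ← h2]
    simp only [map_add, map_sub, map_mul, map_neg, map_pow, map_ofNat]
    ring
  unfold ptr
  rw [(div_modByMonic_unique _ _ hm ⟨e.symm, ?_⟩).2, hn]
  · rw [coeff_add, coeff_C_mul_X, coeff_C]; simp
  · rw [degree_eq_natDegree hm.ne_zero, hn]
    exact lt_of_le_of_lt degree_linear_le (by norm_num)

end PartA

section PartB
open Polynomial
def RCFactor (R : Type*) [Field R] : Prop :=
  ∀ p : R[X], p.Monic → Irreducible p →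
    (∃ r, p = X - C r) ∨ ∃ a b, b ≠ 0 ∧ p = (X - C a) ^ 2 + C (b ^ 2)

lemma rc_induction {R : Type*} [Field R] (h : RCFactor R) {P : R[X] → Prop} (h1 : P 1)
    (hl : ∀ r m, m.Monic → P m → P ((X - C r) * m))
    (hq : ∀ a b m, b ≠ 0 → m.Monic → P m → P (((X - C a) ^ 2 + C (b ^ 2)) * m)) :
    ∀ m : R[X], m.Monic → P m := by
  intro m
  induction hn : m.natDegree using Nat.strong_induction_on generalizing m with
  | _ n ih =>
    intro hm
    by_cases e : m = 1
    · rwa [e]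
    have hu : ¬ IsUnit m := fun hu => e (hm.isUnit_iff.1 hu)
    obtain ⟨p, hp, hirr, k, rfl⟩ := exists_monic_irreducible_factor m hu
    have hk : k.Monic := hp.of_mul_monic_left hm
    have hpd : 0 < p.natDegree := hirr.natDegree_pos
    rw [hp.natDegree_mul hk] at hn
    have := ih k.natDegree (by omega) k rfl hk
    rcases h p hp hirr with ⟨r, rfl⟩ | ⟨a, b, hb, rfl⟩
    · exact hl _ _ hk this
    · exact hq _ _ _ hb hk this

lemma quad_pos {R : Type*} [Field R] [LinearOrder R] [IsStrictOrderedRing R] (a b : R)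
    (hb : b ≠ 0) (x : R) : 0 < ((X - C a) ^ 2 + C (b ^ 2)).eval x := by
  simp; positivity

def PtrDecomp {R : Type*} [Field R] (m : R[X]) : Prop :=
    ∃ r s : ℕ, ∃ ρ : Fin r → R[X] →ₗ[R] R, ∃ u w : Fin s → R[X] →ₗ[R] R,
      m.natDegree = r + 2 * s ∧
      (∀ p, ptr m (p ^ 2) = ∑ i, (ρ i p) ^ 2 + 2 * ∑ j, ((u j p) ^ 2 - (w j p) ^ 2)) ∧
      ((∃ x, m.IsRoot x) ↔ 0 < r) ∧
      (m.Separable → ∀ p, (∀ i, ρ i p = 0) → (∀ j, u j p = 0) → (∀ j, w j p = 0) → m ∣ p)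

theorem ptr_decomp {R : Type*} [Field R] [LinearOrder R] [IsStrictOrderedRing R]
    (h : RCFactor R) : ∀ (m : R[X]), m.Monic → PtrDecomp m := by
  refine rc_induction (P := PtrDecomp) h ?_ ?_ ?_
  · refine ⟨0, 0, Fin.elim0, Fin.elim0, Fin.elim0, by simp, by simp [ptr_one_left], by simp, by simp⟩
  · rintro t m hm ⟨r, s, ρ, u, w, hn, hq, hr, hs⟩
    refine ⟨r + 1, s, Fin.cons (Polynomial.leval t) ρ, u, w, ?_, ?_, ?_, ?_⟩
    · rw [(monic_X_sub_C t).natDegree_mul hm, natDegree_X_sub_C, hn]; ring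
    · intro p
      rw [ptr_mul (monic_X_sub_C t) hm, ptr_lin, hq, Fin.sum_univ_succ]
      simp
      ring
    · simp only [Nat.succ_pos, iff_true]
      exact ⟨t, by simp⟩
    · intro hsep p h1 h2 h3
      refine hsep.isCoprime.mul_dvd ?_ (hs hsep.of_mul_right p (fun i => ?_) h2 h3)
      · rw [dvd_iff_isRoot]; simpa using h1 0
      · simpa using h1 i.succ
  · rintro a b m hb hm ⟨r, s, ρ, u, w, hn, hq, hr, hs⟩
    obtain ⟨qm, qn⟩ := quad_monic a b
    have pq := ptr_quad a b
    have rq := quad_rem a b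
    have rt := quad_pos a b hb
    generalize (X - C a) ^ 2 + C (b ^ 2) = q at *
    refine ⟨r, s + 1, ρ,
      Fin.cons (a • (lcoeff R 1 ∘ₗ modByMonicHom q) + lcoeff R 0 ∘ₗ modByMonicHom q) u,
      Fin.cons (b • (lcoeff R 1 ∘ₗ modByMonicHom q)) w, ?_, ?_, ?_, ?_⟩
    · rw [qm.natDegree_mul hm, qn, hn]; ring
    · intro p
      rw [ptr_mul qm hm, pq, hq, Fin.sum_univ_succ (n := s)]
      simp
      ring
    · rw [← hr]
      constructor
      · rintro ⟨x, hx⟩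
        refine ⟨x, ?_⟩
        have := rt x
        simp only [IsRoot.def, eval_mul, mul_eq_zero] at hx
        rcases hx with hx | hx
        · exact absurd hx this.ne'
        · exact hx
      · rintro ⟨x, hx⟩
        exact ⟨x, by simp only [IsRoot.def] at hx; simp [hx]⟩
    · intro hsep p h1 h2 h3
      refine hsep.isCoprime.mul_dvd ?_ (hs hsep.of_mul_right p h1 (fun i => ?_) (fun i => ?_))
      · have e1 := h2 0
        have e2 := h3 0
        simp [hb] at e1 e2
        simp [e2] at e1
        rw [← modByMonic_eq_zero_iff_dvd qm, rq p, e1, e2]; simp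
      · simpa using h2 i.succ
      · simpa using h3 i.succ

noncomputable def ptrL {V : Type*} [CommRing V] (m : V[X]) : V[X] →ₗ[V] V where
  toFun := ptr m
  map_add' := ptr_add m
  map_smul' c p := by simp [ptr_smul]

lemma ptr_sq_sum {R ι : Type*} [Field R] [Fintype ι] (m : R[X]) (v : ι → R[X])
    (horth : ∀ i j, i ≠ j → ptr m (v i * v j) = 0) (a : ι → R) :
    ptr m ((∑ i, a i • v i) ^ 2) = ∑ i, a i ^ 2 * ptr m (v i ^ 2) := by
  classical
  change ptrL m _ = _
  rw [sq, Finset.sum_mul_sum, map_sum]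
  refine Finset.sum_congr rfl fun i _ => ?_
  rw [map_sum, Finset.sum_eq_single i]
  · rw [smul_mul_smul_comm, map_smul]; simp [ptrL, sq]
  · intro j _ hj
    rw [smul_mul_smul_comm, map_smul]
    have := horth i j hj.symm
    simp [ptrL, this]
  · simp

lemma sig_N {R : Type*} [Field R] [LinearOrder R] [IsStrictOrderedRing R]
    (h : RCFactor R) (m : R[X]) (hm : m.Monic) (n : ℕ) (hn : m.natDegree = n) (v : Fin n → R[X])
    (horth : ∀ i j, i ≠ j → ptr m (v i * v j) = 0) (hlin : LinearIndependent R v)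
    (hdeg : ∀ i, (v i).degree < n) (hsep : m.Separable) (hroot : ∃ x, m.IsRoot x) :
    2 * Fintype.card {i // ¬ 0 < ptr m (v i ^ 2)} < n := by
  classical
  obtain ⟨r, s, ρ, u, w, hn', hq, hr, hs⟩ := ptr_decomp h m hm
  suffices H : Fintype.card {i // ¬ 0 < ptr m (v i ^ 2)} ≤ s by
    have := hr.1 hroot
    omega
  let S := {i // ¬ 0 < ptr m (v i ^ 2)}
  let T : (S → R) →ₗ[R] R[X] := Fintype.linearCombination R (fun i : S => v i)
  let Φ : (S → R) →ₗ[R] (Fin s → R) := LinearMap.pi (fun j => w j ∘ₗ T)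
  have hT : ∀ a, T a = ∑ i, a i • v i := fun a => by
    simp [T, Fintype.linearCombination_apply]
  have hlS : LinearIndependent R (fun i : S => v i) := hlin.comp _ Subtype.val_injective
  have inj : Function.Injective Φ := by
    rw [← LinearMap.ker_eq_bot, LinearMap.ker_eq_bot']
    intro a ha
    have hw : ∀ j, w j (T a) = 0 := fun j => congrFun ha j
    have e1 := hq (T a)
    have e2 := ptr_sq_sum m (fun i : S => v i) (fun i j hij => horth i j
      (fun hh => hij (Subtype.ext hh))) a
    rw [← hT] at e2
    have e3 : ∑ i, a i ^ 2 * ptr m (v i ^ 2) ≤ 0 := Finset.sum_nonpos fun i _ =>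
      mul_nonpos_of_nonneg_of_nonpos (sq_nonneg _) (not_lt.1 i.2)
    simp only [hw] at e1
    have p1 : 0 ≤ ∑ i, (ρ i (T a)) ^ 2 := Finset.sum_nonneg fun i _ => sq_nonneg _
    have p2 : 0 ≤ ∑ j, ((u j (T a)) ^ 2 - (0:R) ^ 2) := Finset.sum_nonneg fun i _ => by
      simpa using sq_nonneg _
    have z1 : ∑ i, (ρ i (T a)) ^ 2 = 0 := by linarith
    have z2 : ∑ j, ((u j (T a)) ^ 2 - (0:R) ^ 2) = 0 := by linarith
    rw [Finset.sum_eq_zero_iff_of_nonneg fun i _ => sq_nonneg _] at z1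
    rw [Finset.sum_eq_zero_iff_of_nonneg fun i _ => by simpa using sq_nonneg _] at z2
    have dv := hs hsep (T a) (fun i => by simpa using z1 i) (fun i => by simpa using z2 i) hw
    have dT : (T a).degree < m.degree := by
      rw [degree_eq_natDegree hm.ne_zero, hn, hT]
      refine lt_of_le_of_lt (degree_sum_le _ _) ?_
      rw [Finset.sup_lt_iff (WithBot.bot_lt_coe _)]
      intro i _
      exact lt_of_le_of_lt (degree_smul_le _ _) (hdeg _)
    have := eq_zero_of_dvd_of_degree_lt dv dT
    rw [hT] at this
    funext i
    exact Fintype.linearIndependent_iff.1 hlS a this i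
  have := LinearMap.finrank_le_finrank_of_injective inj
  simpa only [Module.finrank_pi, Fintype.card_fin] using this

lemma sig_Z {R : Type*} [Field R] [LinearOrder R] [IsStrictOrderedRing R]
    (h : RCFactor R) (m : R[X]) (hm : m.Monic) (n : ℕ) (hn : m.natDegree = n) (v : Fin n → R[X])
    (horth : ∀ i j, i ≠ j → ptr m (v i * v j) = 0) (hroot : ¬ ∃ x, m.IsRoot x) :
    2 * Fintype.card {i // 0 < ptr m (v i ^ 2)} ≤ n := by
  classical
  obtain ⟨r, s, ρ, u, w, hn', hq, hr, hs⟩ := ptr_decomp h m hm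
  have hr0 : r = 0 := by
    by_contra h0
    exact hroot (hr.2 (Nat.pos_of_ne_zero h0))
  subst hr0
  suffices H : Fintype.card {i // 0 < ptr m (v i ^ 2)} ≤ s by omega
  let S := {i // 0 < ptr m (v i ^ 2)}
  let T : (S → R) →ₗ[R] R[X] := Fintype.linearCombination R (fun i : S => v i)
  let Φ : (S → R) →ₗ[R] (Fin s → R) := LinearMap.pi (fun j => u j ∘ₗ T)
  have hT : ∀ a, T a = ∑ i, a i • v i := fun a => by
    simp [T, Fintype.linearCombination_apply]
  have inj : Function.Injective Φ := by
    rw [← LinearMap.ker_eq_bot, LinearMap.ker_eq_bot']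
    intro a ha
    have hw : ∀ j, u j (T a) = 0 := fun j => congrFun ha j
    have e1 := hq (T a)
    have e2 := ptr_sq_sum m (fun i : S => v i) (fun i j hij => horth i j
      (fun hh => hij (Subtype.ext hh))) a
    rw [← hT] at e2
    have hnn : ∀ i : S, 0 ≤ a i ^ 2 * ptr m (v i ^ 2) := fun i =>
      mul_nonneg (sq_nonneg _) i.2.le
    simp only [hw, Finset.univ_eq_empty, Finset.sum_empty, zero_add] at e1
    have p2 : ∑ j, ((0:R) ^ 2 - (w j (T a)) ^ 2) ≤ 0 := Finset.sum_nonpos fun i _ => by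
      simpa using sq_nonneg _
    have e3 : ∑ i : S, a i ^ 2 * ptr m (v i ^ 2) = 0 :=
      le_antisymm (by linarith) (Finset.sum_nonneg fun i _ => hnn i)
    rw [Finset.sum_eq_zero_iff_of_nonneg fun i _ => hnn i] at e3
    funext i
    have := e3 i (Finset.mem_univ _)
    simpa [i.2.ne'] using this
  have := LinearMap.finrank_le_finrank_of_injective inj
  simpa using this

theorem sig_transfer {R : Type*} [Field R] [LinearOrder R] [IsStrictOrderedRing R]
    (h : RCFactor R) {V : Type*} [CommRing V] (f g : V →+* R) (m : V[X]) (hm : m.Monic) (n : ℕ)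
    (hn : m.natDegree = n) (v : Fin n → V[X])
    (horth : ∀ i j, i ≠ j → ptr m (v i * v j) = 0)
    (hlin : LinearIndependent R (fun i => (v i).map f))
    (hdeg : ∀ i, ((v i).map f).degree < n) (hsep : (m.map f).Separable)
    (hroot : ∃ x, (m.map f).IsRoot x)
    (hpos : ∀ i, 0 < f (ptr m (v i ^ 2)) → 0 < g (ptr m (v i ^ 2))) :
    ∃ x, (m.map g).IsRoot x := by
  classical
  by_contra hno
  have ho : ∀ φ : V →+* R, ∀ i j, i ≠ j → ptr (m.map φ) ((v i).map φ * (v j).map φ) = 0 := by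
    intro φ i j hij
    rw [← Polynomial.map_mul, ← ptr_map φ hm, horth i j hij, map_zero]
  have a := sig_N h (m.map f) (hm.map f) n (by rw [hm.natDegree_map, hn]) _ (ho f) hlin hdeg hsep hroot
  have b := sig_Z h (m.map g) (hm.map g) n (by rw [hm.natDegree_map, hn]) _ (ho g) hno
  have hf : ∀ φ : V →+* R, ∀ i, ptr (m.map φ) ((v i).map φ ^ 2) = φ (ptr m (v i ^ 2)) := by
    intro φ i
    rw [← Polynomial.map_pow, ← ptr_map φ hm]
  simp only [hf] at a b
  have c := Fintype.card_subtype_compl (fun i : Fin n => 0 < f (ptr m (v i ^ 2)))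
  have d : Fintype.card {i // 0 < f (ptr m (v i ^ 2))} ≤ Fintype.card {i // 0 < g (ptr m (v i ^ 2))} :=
    Fintype.card_subtype_mono _ _ hpos
  have e := Fintype.card_subtype_le (fun i : Fin n => 0 < f (ptr m (v i ^ 2)))
  simp only [Fintype.card_fin] at c e
  omega

end PartB

section PartC
open Polynomial IntermediateField
lemma rc_odd {R E : Type*} [Field R] [CharZero R] [IsRealClosed R] [Field E] [Algebra R E]
    [FiniteDimensional R E] (h : Odd (Module.finrank R E)) : Module.finrank R E = 1 := by
  obtain ⟨α, hα⟩ := Field.exists_primitive_element R E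
  have hint : IsIntegral R α := Algebra.IsIntegral.isIntegral α
  have hd : (minpoly R α).natDegree = Module.finrank R E :=
    (Field.primitive_element_iff_minpoly_natDegree_eq R α).1 hα
  rw [← hd] at h
  obtain ⟨x, hx⟩ := IsRealClosed.exists_isRoot_of_odd_natDegree h
  have := degree_eq_one_of_irreducible_of_root (minpoly.irreducible hint) hx
  rw [← hd]
  exact natDegree_eq_of_degree_eq_some this

lemma rc_sqrt {R L : Type*} [Field R] [LinearOrder R] [IsStrictOrderedRing R] [IsRealClosed R]
    [Field L] [Algebra R L] (i : L) (hi : i ^ 2 = -1) (a b : R) :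
    ∃ u v : R, (algebraMap R L u + algebraMap R L v * i) ^ 2 =
      algebraMap R L a + algebraMap R L b * i := by
  have h0 : 0 ≤ a ^ 2 + b ^ 2 := by positivity
  obtain ⟨r', hr'⟩ := IsRealClosed.nonneg_iff_isSquare.1 h0
  obtain ⟨r, hr0, hr⟩ : ∃ r : R, 0 ≤ r ∧ r ^ 2 = a ^ 2 + b ^ 2 :=
    ⟨|r'|, abs_nonneg _, by rw [sq_abs, hr', sq]⟩
  have h1 : a ≤ r := by nlinarith [sq_nonneg b]
  have h2 : -a ≤ r := by nlinarith [sq_nonneg b]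
  obtain ⟨u', hu'⟩ := IsRealClosed.nonneg_iff_isSquare.1 (show 0 ≤ (r + a) / 2 by linarith)
  obtain ⟨v', hv'⟩ := IsRealClosed.nonneg_iff_isSquare.1 (show 0 ≤ (r - a) / 2 by linarith)
  have huv : (2 * u' * v') ^ 2 = b ^ 2 := by
    have : (2 * u' * v') ^ 2 = 4 * (u' * u') * (v' * v') := by ring
    rw [this, ← hu', ← hv']; linear_combination hr
  have : ∃ u v : R, u ^ 2 - v ^ 2 = a ∧ 2 * u * v = b := by
    rcases sq_eq_sq_iff_eq_or_eq_neg.1 huv with h | h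
    · exact ⟨u', v', by linear_combination hv' - hu', h⟩
    · exact ⟨u', -v', by linear_combination hv' - hu', by linear_combination -h⟩
  obtain ⟨u, v, e1, e2⟩ := this
  refine ⟨u, v, ?_⟩
  rw [← e1, ← e2]
  simp only [map_sub, map_mul, map_pow, map_ofNat]
  linear_combination (algebraMap R L v) ^ 2 * hi

lemma rc_mem_adjoin_i {R L : Type*} [Field R] [Field L] [Algebra R L] (i : L) (hi : i ^ 2 = -1)
    (z : L) (hz : z ∈ R⟮i⟯) : ∃ a b : R, z = algebraMap R L a + algebraMap R L b * i := by
  have hint : IsIntegral R i := ⟨X ^ 2 + 1, by monicity!, by simp [hi]⟩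
  have hz' : z ∈ Algebra.adjoin R {i} := by
    rw [← IntermediateField.adjoin_simple_toSubalgebra_of_isAlgebraic hint.isAlgebraic]; exact hz
  induction hz' using Algebra.adjoin_induction with
  | mem x hx => exact ⟨0, 1, by simp at hx; simp [hx]⟩
  | algebraMap r => exact ⟨r, 0, by simp⟩
  | add x y hx hy ihx ihy =>
    have t : (R⟮i⟯).toSubalgebra = Algebra.adjoin R {i} :=
      IntermediateField.adjoin_simple_toSubalgebra_of_isAlgebraic hint.isAlgebraic
    rw [← t] at hx hy
    obtain ⟨a, b, rfl⟩ := ihx hx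
    obtain ⟨c, d, rfl⟩ := ihy hy
    exact ⟨a + c, b + d, by simp; ring⟩
  | mul x y hx hy ihx ihy =>
    have t : (R⟮i⟯).toSubalgebra = Algebra.adjoin R {i} :=
      IntermediateField.adjoin_simple_toSubalgebra_of_isAlgebraic hint.isAlgebraic
    rw [← t] at hx hy
    obtain ⟨a, b, rfl⟩ := ihx hx
    obtain ⟨c, d, rfl⟩ := ihy hy
    exact ⟨a * c - b * d, a * d + b * c, by
      simp only [map_sub, map_mul, map_add]
      linear_combination (algebraMap R L b * algebraMap R L d) * hi⟩

lemma no_quadratic {M Q : Type*} [Field M] [CharZero M] [Field Q] [Algebra M Q]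
    (hsq : ∀ z : M, IsSquare z) (h : Module.finrank M Q = 2) : False := by
  haveI : FiniteDimensional M Q := Module.finite_of_finrank_pos (by omega)
  obtain ⟨α, hα⟩ := Field.exists_primitive_element M Q
  have hint : IsIntegral M α := Algebra.IsIntegral.isIntegral α
  have hd : (minpoly M α).natDegree = 2 := by
    rw [← h]; exact (Field.primitive_element_iff_minpoly_natDegree_eq M α).1 hα
  have hirr := minpoly.irreducible hint
  have hm := minpoly.monic hint
  obtain ⟨s, hs⟩ := hsq (discrim ((minpoly M α).coeff 2) ((minpoly M α).coeff 1) ((minpoly M α).coeff 0))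
  have hc2 : (minpoly M α).coeff 2 = 1 := by rw [← hd]; exact hm.coeff_natDegree
  obtain ⟨x, hx⟩ := exists_quadratic_eq_zero (a := (minpoly M α).coeff 2) (by rw [hc2]; exact one_ne_zero) ⟨s, hs⟩
  have hroot : (minpoly M α).IsRoot x := by
    rw [IsRoot.def, eval_eq_sum_range, hd]
    simp only [Finset.sum_range_succ, Finset.sum_range_zero]
    linear_combination hx
  have := degree_eq_one_of_irreducible_of_root hirr hroot
  have h1 : (minpoly M α).natDegree = 1 := natDegree_eq_of_degree_eq_some this
  omega

theorem rc_finrank {R L : Type*} [Field R] [LinearOrder R] [IsStrictOrderedRing R] [IsRealClosed R]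
    [Field L] [Algebra R L] [FiniteDimensional R L] [IsGalois R L] (i : L) (hi : i ^ 2 = -1) :
    Module.finrank R L ≤ 2 := by
  classical
  haveI : Fact (Nat.Prime 2) := ⟨Nat.prime_two⟩
  have hint : IsIntegral R i := Algebra.IsIntegral.isIntegral i
  have hG : ∃ k, Module.finrank R L = 2 ^ k := by
    obtain ⟨S⟩ : Nonempty (Sylow 2 (L ≃ₐ[R] L)) := inferInstance
    have h1 : Module.finrank R (fixedField (S : Subgroup (L ≃ₐ[R] L))) *
        Module.finrank (fixedField (S : Subgroup (L ≃ₐ[R] L))) L = Module.finrank R L :=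
      Module.finrank_mul_finrank _ _ _
    have h2 : Module.finrank (fixedField (S : Subgroup (L ≃ₐ[R] L))) L = Nat.card S :=
      IntermediateField.finrank_fixedField_eq_card _
    have h3 := Subgroup.card_mul_index (S : Subgroup (L ≃ₐ[R] L))
    rw [IsGalois.card_aut_eq_finrank, ← h1, h2, mul_comm] at h3
    have h4 : (S : Subgroup (L ≃ₐ[R] L)).index =
        Module.finrank R (fixedField (S : Subgroup (L ≃ₐ[R] L))) :=
      Nat.eq_of_mul_eq_mul_right Nat.card_pos h3
    have h5 : ¬ 2 ∣ (S : Subgroup (L ≃ₐ[R] L)).index := S.not_dvd_index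
    rw [h4] at h5
    have h6 := rc_odd (R := R) (E := fixedField (S : Subgroup (L ≃ₐ[R] L)))
      (Nat.not_even_iff_odd.1 (fun h => h5 h.two_dvd))
    obtain ⟨k, hk⟩ := IsPGroup.iff_card.1 S.isPGroup'
    exact ⟨k, by rw [← h1, h6, h2, one_mul, hk]⟩
  obtain ⟨k, hk⟩ := hG
  have hM2 : Module.finrank R R⟮i⟯ ≤ 2 := by
    rw [IntermediateField.adjoin.finrank hint]
    have hd : (X ^ 2 + 1 : R[X]).natDegree = 2 := by compute_degree!
    rw [← hd]
    exact natDegree_le_of_dvd (minpoly.dvd R i (by simp [hi])) (Monic.ne_zero (by monicity!))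
  have hmul : Module.finrank R R⟮i⟯ * Module.finrank R⟮i⟯ L = Module.finrank R L :=
    Module.finrank_mul_finrank _ _ _
  have hsq : ∀ z : R⟮i⟯, IsSquare z := by
    intro z
    obtain ⟨a, b, hab⟩ := rc_mem_adjoin_i i hi z z.2
    obtain ⟨u, v, huv⟩ := rc_sqrt i hi a b
    refine ⟨⟨algebraMap R L u + algebraMap R L v * i, ?_⟩, ?_⟩
    · exact add_mem (IntermediateField.algebraMap_mem _ _) (mul_mem (IntermediateField.algebraMap_mem _ _) (mem_adjoin_simple_self R i))
    · apply Subtype.ext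
      simp only [MulMemClass.mk_mul_mk]
      rw [hab, ← huv, sq]
  obtain ⟨j, hj1, hj⟩ := (Nat.dvd_prime_pow Nat.prime_two).1
    (show Module.finrank R⟮i⟯ L ∣ 2 ^ k from hk ▸ hmul ▸ dvd_mul_left _ _)
  rcases j with _ | j
  · rw [← hmul, hj]; omega
  · exfalso
    obtain ⟨K, hK⟩ := Sylow.exists_subgroup_card_pow_prime (G := L ≃ₐ[R⟮i⟯] L) 2 (n := j) (by
      rw [IsGalois.card_aut_eq_finrank, hj]; exact pow_dvd_pow _ (Nat.le_succ _))
    have h1 : Module.finrank R⟮i⟯ (fixedField K) * Module.finrank (fixedField K) L =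
      Module.finrank R⟮i⟯ L := Module.finrank_mul_finrank _ _ _
    rw [IntermediateField.finrank_fixedField_eq_card, hK, hj, pow_succ, mul_comm] at h1
    exact no_quadratic hsq (Nat.eq_of_mul_eq_mul_left (by positivity) h1)

theorem rc_factor (R : Type*) [Field R] [LinearOrder R] [IsStrictOrderedRing R] [IsRealClosed R] :
    RCFactor R := by
  intro p hp hirr
  have hdeg : p.natDegree ≤ 2 := by
    let q : R[X] := p * (X ^ 2 + 1)
    have hq0 : (X ^ 2 + 1 : R[X]) ≠ 0 := Monic.ne_zero (by monicity!)
    have hq : q ≠ 0 := mul_ne_zero hp.ne_zero hq0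
    let L := q.SplittingField
    have hspl : (q.map (algebraMap R L)).Splits := SplittingField.splits q
    have hs1 : ((X ^ 2 + 1 : R[X]).map (algebraMap R L)).Splits := by
      refine hspl.of_dvd ?_ ?_
      · exact (Polynomial.map_ne_zero_iff (algebraMap R L).injective).2 hq
      · exact Polynomial.map_dvd _ (dvd_mul_left _ _)
    have hs2 : (p.map (algebraMap R L)).Splits := by
      refine hspl.of_dvd ?_ ?_
      · exact (Polynomial.map_ne_zero_iff (algebraMap R L).injective).2 hq
      · exact Polynomial.map_dvd _ (dvd_mul_right _ _)
    obtain ⟨i, hi⟩ := hs1.exists_eval_eq_zero (by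
      have : (X ^ 2 + 1 : R[X]).degree = 2 := by compute_degree!
      rw [degree_map, this]; norm_num)
    obtain ⟨α, hα⟩ := hs2.exists_eval_eq_zero (by
      rw [degree_map]; exact (degree_pos_of_irreducible hirr).ne')
    haveI : IsGalois R L := {}
    have := rc_finrank (R := R) (L := L) i (by
      simp at hi; exact eq_neg_of_add_eq_zero_left hi)
    have hmin : p = minpoly R α := minpoly.eq_of_irreducible_of_monic hirr
      (by rwa [eval_map_algebraMap] at hα) hp
    rw [hmin]
    exact (minpoly.natDegree_le α).trans this
  have hpos := hirr.natDegree_pos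
  have : p.natDegree = 1 ∨ p.natDegree = 2 := by omega
  rcases this with h | h
  · left
    refine ⟨- p.coeff 0, ?_⟩
    have := hp.eq_X_add_C h
    rw [this]; simp
  · right
    have e : p = X ^ 2 + C (p.coeff 1) * X + C (p.coeff 0) := by
      have := p.as_sum_range_C_mul_X_pow
      rw [h] at this
      have hc : p.coeff 2 = 1 := by rw [← h]; exact hp.coeff_natDegree
      simp only [Finset.sum_range_succ, Finset.sum_range_zero, hc] at this
      rw [this]; simp; ring
    generalize p.coeff 1 = b at e
    generalize p.coeff 0 = c at e
    by_cases hc : 0 < c - (b / 2) ^ 2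
    · obtain ⟨β, hβ⟩ := IsRealClosed.nonneg_iff_isSquare.1 hc.le
      refine ⟨-(b / 2), β, ?_, ?_⟩
      · rintro rfl; simp at hβ; exact hc.ne' hβ
      · rw [e, sq β, ← hβ]
        have : (C b : R[X]) = 2 * C (b / 2) := by
          rw [← map_ofNat C 2, ← C_mul]; congr 1; ring
        rw [this]
        simp only [map_neg, map_sub, map_pow]; ring
    · exfalso
      obtain ⟨β, hβ⟩ := IsRealClosed.nonneg_iff_isSquare.1 (show 0 ≤ (b / 2) ^ 2 - c by linarith)
      have hr : p.IsRoot (β - b / 2) := by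
        rw [IsRoot.def, e]; simp; linear_combination -hβ
      have := degree_eq_one_of_irreducible_of_root hirr hr
      have h1 : p.natDegree = 1 := natDegree_eq_of_degree_eq_some this
      omega

end PartC

section PartD
open Polynomial IntermediateField
inductive LowSq {R : Type*} [CommRing R] (d : ℕ) : R[X] → Prop
  | zero : LowSq d 0
  | add (g F : R[X]) (hg : g.natDegree < d) (hF : LowSq d F) : LowSq d (g * g + F)

def RMax (R : Type*) [Field R] : Prop :=
  ∀ p : R[X], p.Monic → Irreducible p → 2 ≤ p.natDegree →
    ∃ F, LowSq p.natDegree F ∧ p ∣ 1 + F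

lemma lowSq_two {R : Type*} [Field R] (x : R) {d : ℕ} (hd : d = 2) (F : R[X]) (h : LowSq d F) :
    ∃ A B c : R, IsSumSq A ∧ IsSumSq B ∧ X ^ 2 - C x ∣ F - (C (A + x * B) + C c * X) := by
  induction h with
  | zero => exact ⟨0, 0, 0, .zero, .zero, by simp⟩
  | add g F hg hF ih =>
    obtain ⟨A, B, c, hA, hB, q, hq⟩ := ih
    obtain ⟨a, b, rfl⟩ := exists_eq_X_add_C_of_natDegree_le_one (show g.natDegree ≤ 1 by omega)
    refine ⟨b * b + A, a * a + B, 2 * a * b + c, .sq_add _ hA, .sq_add _ hB, C (a * a) + q, ?_⟩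
    simp only [map_add, map_mul, map_ofNat] at hq ⊢
    linear_combination hq

lemma isSumSq_inv {R : Type*} [Field R] {B : R} (hB : IsSumSq B) : IsSumSq B⁻¹ := by
  by_cases h : B = 0
  · simp [h]
  have : B⁻¹ = B * (B⁻¹ * B⁻¹) := by field_simp
  rw [this]; exact hB.mul (.mul_self _)

lemma rmax_neg {R : Type*} [Field R] [IsSemireal R] (h : RMax R) (x : R) (hx : ¬ IsSquare x) :
    IsSumSq (-x) := by
  have hdeg : (X ^ 2 - C x : R[X]).natDegree = 2 := natDegree_X_pow_sub_C
  have hmon : (X ^ 2 - C x : R[X]).Monic := monic_X_pow_sub_C x two_ne_zero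
  have hirr : Irreducible (X ^ 2 - C x : R[X]) := by
    rw [hmon.irreducible_iff_roots_eq_zero_of_degree_le_three (by omega) (by omega)]
    rw [Multiset.eq_zero_iff_forall_notMem]
    intro a ha
    have := isRoot_of_mem_roots ha
    simp at this
    exact hx ⟨a, by linear_combination -this⟩
  obtain ⟨F, hF, hd⟩ := h _ hmon hirr (by omega)
  obtain ⟨A, B, c, hA, hB, hq⟩ := lowSq_two x hdeg F hF
  have h1 : X ^ 2 - C x ∣ C (1 + A + x * B) + C c * X := by
    have := dvd_sub hd hq
    convert this using 1
    simp only [map_add, map_mul, map_one]; ring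
  have h2 : C (1 + A + x * B) + C c * X = 0 := by
    refine eq_zero_of_dvd_of_natDegree_lt h1 ?_
    rw [hdeg]
    have : (C (1 + A + x * B) + C c * X).natDegree ≤ 1 := by compute_degree
    omega
  have h3 : 1 + A + x * B = 0 := by simpa using congrArg (coeff · 0) h2
  have hB0 : B ≠ 0 := by
    rintro rfl
    exact IsSemireal.one_add_ne_zero hA (by simpa using h3)
  have : -x = (1 + A) * B⁻¹ := by field_simp; linear_combination -h3
  rw [this]
  exact (IsSumSq.one.add hA).mul (isSumSq_inv hB)

lemma rmax_sq {R : Type*} [Field R] [IsSemireal R] (h : RMax R) {y : R} (hy : IsSumSq y) :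
    IsSquare y := by
  by_contra hn
  have h1 := rmax_neg h y hn
  have hy0 : y ≠ 0 := by rintro rfl; simp at hn
  apply IsSemireal.not_isSumSq_neg_one R
  have : (-1 : R) = -y * y⁻¹ := by field_simp
  rw [this]; exact h1.mul (isSumSq_inv hy)

noncomputable def rmaxCone {R : Type*} [Field R] [IsSemireal R] : RingCone R where
  carrier := {x | IsSumSq x}
  mul_mem' := fun h1 h2 => IsSumSq.mul h1 h2
  one_mem' := IsSumSq.one
  add_mem' := fun h1 h2 => IsSumSq.add h1 h2
  zero_mem' := IsSumSq.zero
  eq_zero_of_mem_of_neg_mem' := by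
    intro a h1 h2
    by_contra h0
    apply IsSemireal.not_isSumSq_neg_one R
    have : (-1 : R) = -a * a⁻¹ := by field_simp
    rw [this]; exact IsSumSq.mul h2 (isSumSq_inv h1)

lemma rmax_order {R : Type*} [Field R] [IsSemireal R] (h : RMax R) :
    ∃ _ : LinearOrder R, IsStrictOrderedRing R ∧ ∀ x : R, 0 ≤ x → IsSquare x := by
  classical
  haveI : HasMemOrNegMem (rmaxCone (R := R)) := ⟨fun a => by
    by_cases ha : IsSquare a
    · left; exact ha.isSumSq
    · right; exact rmax_neg h a ha⟩
  letI : LinearOrder R := LinearOrder.mkOfAddGroupCone (rmaxCone (R := R))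
  haveI : IsOrderedRing R := IsOrderedRing.mkOfCone (rmaxCone (R := R))
  refine ⟨inferInstance, IsOrderedRing.toIsStrictOrderedRing R, fun x hx => rmax_sq h ?_⟩
  have : x - 0 ∈ (rmaxCone (R := R)) := hx
  rwa [sub_zero] at this

lemma lowSq_deg {R : Type*} [Field R] [LinearOrder R] [IsStrictOrderedRing R] {d : ℕ} {F : R[X]}
    (h : LowSq d F) : (F = 0 ∨ (Even F.natDegree ∧ 0 < F.leadingCoeff ∧ F.natDegree + 2 ≤ 2 * d)) := by
  induction h with
  | zero => left; rfl
  | add g F hg hF ih =>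
    by_cases hg0 : g = 0
    · simpa [hg0] using ih
    have d1 : (g * g).natDegree = g.natDegree + g.natDegree := natDegree_mul hg0 hg0
    have l1 : 0 < (g * g).leadingCoeff := by
      rw [leadingCoeff_mul]; exact mul_self_pos.2 (leadingCoeff_ne_zero.2 hg0)
    have e1 : Even (g * g).natDegree := ⟨_, d1⟩
    right
    rcases ih with rfl | ⟨e2, l2, d2⟩
    · rw [add_zero]; exact ⟨e1, l1, by omega⟩
    rcases lt_trichotomy (g * g).natDegree F.natDegree with hlt | heq | hlt
    · rw [natDegree_add_eq_right_of_natDegree_lt hlt,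
        leadingCoeff_add_of_degree_lt (degree_lt_degree hlt)]
      exact ⟨e2, l2, d2⟩
    · have hc : (g * g + F).coeff F.natDegree = (g * g).leadingCoeff + F.leadingCoeff := by
        rw [coeff_add, leadingCoeff, leadingCoeff, heq]
      have hn : (g * g + F).natDegree = F.natDegree := by
        refine natDegree_eq_of_le_of_coeff_ne_zero ?_ ?_
        · exact (natDegree_add_le _ _).trans (by omega)
        · rw [hc]; positivity
      refine ⟨hn ▸ e2, ?_, hn ▸ d2⟩
      rw [leadingCoeff, hn, hc]; positivity
    · rw [natDegree_add_eq_left_of_natDegree_lt hlt,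
        leadingCoeff_add_of_degree_lt' (degree_lt_degree hlt)]
      exact ⟨e1, l1, by omega⟩

lemma lowSq_eval {R : Type*} [Field R] [LinearOrder R] [IsStrictOrderedRing R] {d : ℕ} {F : R[X]}
    (h : LowSq d F) (x : R) : 0 ≤ F.eval x := by
  induction h with
  | zero => simp
  | add g F hg hF ih => simp only [eval_add, eval_mul]; nlinarith [mul_self_nonneg (g.eval x)]

lemma rmax_odd {R : Type*} [Field R] [LinearOrder R] [IsStrictOrderedRing R] (h : RMax R) :
    ∀ p : R[X], Odd p.natDegree → ∃ x, p.IsRoot x := by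
  intro p
  induction hn : p.natDegree using Nat.strong_induction_on generalizing p with
  | _ n ih =>
  intro hodd
  have hp0 : p ≠ 0 := by rintro rfl; simp at hn; subst hn; simp at hodd
  have hu : ¬ IsUnit p := fun hu => by
    rw [natDegree_eq_zero_of_isUnit hu] at hn; subst hn; simp at hodd
  obtain ⟨q, hq, hirr, k, rfl⟩ := exists_monic_irreducible_factor p hu
  have hk0 : k ≠ 0 := right_ne_zero_of_mul hp0
  have hqd := hirr.natDegree_pos
  rw [natDegree_mul hq.ne_zero hk0] at hn
  subst hn
  by_cases ho : Odd k.natDegree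
  · obtain ⟨x, hx⟩ := ih k.natDegree (by omega) k rfl ho
    exact ⟨x, by simp [IsRoot.def.1 hx]⟩
  have hqo : Odd q.natDegree := by
    by_contra hc
    exact (Nat.not_odd_iff_even.2 ((Nat.not_odd_iff_even.1 hc).add (Nat.not_odd_iff_even.1 ho))) hodd
  suffices ∃ x, q.IsRoot x by
    obtain ⟨x, hx⟩ := this
    exact ⟨x, by simp [IsRoot.def.1 hx]⟩
  by_cases h1 : q.natDegree = 1
  · have := hq.eq_X_add_C h1
    rw [this]
    exact ⟨-q.coeff 0, by simp⟩
  obtain ⟨F, hF, t, ht⟩ := h q hq hirr (by omega)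
  have hF' : LowSq q.natDegree (1 * 1 + F) := .add 1 F (by simpa using hqd) hF
  have hpos : ∀ x, 0 < (1 + F).eval x := fun x => by
    have := lowSq_eval hF x
    simp; linarith
  rw [one_mul] at hF'
  have hne : 1 + F ≠ 0 := fun h0 => by have := hpos 0; rw [h0] at this; simp at this
  obtain ⟨he, -, hle⟩ := (lowSq_deg hF').resolve_left hne
  have ht0 : t ≠ 0 := by rintro rfl; simp at ht; exact hne ht
  rw [ht, natDegree_mul hq.ne_zero ht0] at he hle
  have hto : Odd t.natDegree := by
    by_contra hc
    exact Nat.not_even_iff_odd.2 (hqo.add_even (Nat.not_odd_iff_even.1 hc)) he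
  obtain ⟨x, hx⟩ := ih t.natDegree (by omega) t rfl hto
  have := hpos x
  rw [ht, eval_mul, IsRoot.def.1 hx, mul_zero] at this
  exact absurd this (lt_irrefl _)

theorem rmax_rc {R : Type*} [Field R] [IsSemireal R] (h : RMax R) :
    ∃ _ : LinearOrder R, IsStrictOrderedRing R ∧ IsRealClosed R := by
  obtain ⟨o, h1, h2⟩ := rmax_order h
  exact ⟨o, h1, IsRealClosed.of_linearOrderedField (fun {x} hx => h2 x hx) (fun {f} hf => rmax_odd h f hf)⟩

lemma sumSq_descend {K L : Type*} [Field K] [Field L] [Algebra K L] (c : Set (IntermediateField K L))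
    (hne : c.Nonempty) (hdir : DirectedOn (· ≤ ·) c) (s : (sSup c : IntermediateField K L))
    (hs : IsSumSq s) : ∃ E ∈ c, ∃ t : E, IsSumSq t ∧ (t : L) = s := by
  have hmem : ∀ a : L, a ∈ sSup c → ∃ E ∈ c, a ∈ E := by
    intro a ha
    haveI : Nonempty c := hne.to_subtype
    rw [sSup_eq_iSup', ← SetLike.mem_coe,
      IntermediateField.coe_iSup_of_directed (directedOn_iff_directed.1 hdir)] at ha
    simpa using ha
  induction hs with
  | zero => obtain ⟨E, hE⟩ := hne; exact ⟨E, hE, 0, .zero, by simp⟩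
  | sq_add a hs ih =>
    obtain ⟨E, hE, t, ht, hts⟩ := ih
    obtain ⟨E', hE', ha⟩ := hmem a a.2
    obtain ⟨E'', hE'', h1, h2⟩ := hdir E hE E' hE'
    refine ⟨E'', hE'', ⟨a, h2 ha⟩ * ⟨a, h2 ha⟩ + IntermediateField.inclusion h1 t, ?_, ?_⟩
    · refine .sq_add _ ?_
      clear hts
      induction ht with
      | zero => simp
      | sq_add b _ ih => rw [map_add, map_mul]; exact .sq_add _ ih
    · simp [hts]

lemma lowSq_lift {E L : Type*} [Field E] [Field L] [Algebra E L] (p : E[X]) (hp : p.Monic)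
    (hirr : Irreducible p) (α : L) (hα : aeval α p = 0) (s : E⟮α⟯) (hs : IsSumSq s) :
    ∃ F : E[X], LowSq p.natDegree F ∧ aeval α F = (s : L) := by
  have hint : IsIntegral E α := ⟨p, hp, hα⟩
  induction hs with
  | zero => exact ⟨0, .zero, by simp⟩
  | sq_add a hs ih =>
    obtain ⟨F, hF, e⟩ := ih
    have hz' : (a : L) ∈ Algebra.adjoin E {α} := by
      rw [← IntermediateField.adjoin_simple_toSubalgebra_of_isAlgebraic hint.isAlgebraic]; exact a.2
    rw [Algebra.adjoin_singleton_eq_range_aeval] at hz'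
    obtain ⟨g, hg⟩ := hz'
    refine ⟨_, .add (g %ₘ p) F (natDegree_modByMonic_lt g hp hirr.ne_one) hF, ?_⟩
    have : aeval α (g %ₘ p) = (a : L) := by
      rw [← hg, modByMonic_eq_sub_mul_div g]; simp [hα]
    simp [this, e]

theorem exists_rc.{u} {K : Type u} [Field K] (hK : ¬ IsSumSq (-1 : K)) :
    ∃ (R : Type u) (_ : Field R) (_ : LinearOrder R) (_ : Algebra K R), IsStrictOrderedRing R ∧
      IsRealClosed R := by
  let L := AlgebraicClosure K
  let S : Set (IntermediateField K L) := {E | ¬ IsSumSq (-1 : E)}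
  obtain ⟨E, -, hE⟩ := zorn_le_nonempty₀ S (by
    intro c hc hchain y hy
    refine ⟨sSup c, ?_, fun z hz => le_sSup hz⟩
    intro hs
    obtain ⟨E, hE, t, ht, hts⟩ := sumSq_descend c ⟨y, hy⟩ hchain.directedOn _ hs
    apply hc hE
    have : t = -1 := by apply Subtype.ext; rw [hts]; simp
    rwa [this] at ht) ⊥ (by
    intro hs
    apply hK
    have : ∀ s : (⊥ : IntermediateField K L), IsSumSq s → IsSumSq (IntermediateField.botEquiv K L s) := by
      intro s hs
      induction hs with
      | zero => simp
      | sq_add b _ ih => rw [map_add, map_mul]; exact .sq_add _ ih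
    simpa using this _ hs)
  have hEs : ¬ IsSumSq (-1 : E) := hE.1
  haveI : IsSemireal E := IsSemireal.of_not_isSumSq_neg_one hEs
  have hM : RMax E := by
    intro p hp hirr hd
    obtain ⟨α, hα⟩ := IsAlgClosed.exists_aeval_eq_zero L p (degree_pos_of_irreducible hirr).ne'
    have hint : IsIntegral E α := ⟨p, hp, hα⟩
    let E' : IntermediateField K L := (E⟮α⟯).restrictScalars K
    have hle : E ≤ E' := by
      intro x hx
      exact IntermediateField.algebraMap_mem E⟮α⟯ (⟨x, hx⟩ : E)
    have hns : IsSumSq (-1 : E⟮α⟯) := by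
      by_contra hns
      have h1 : E' ≤ E := hE.2 (show E' ∈ S from hns) hle
      have h2 : α ∈ E := h1 (mem_adjoin_simple_self E α)
      have h3 : p.IsRoot (⟨α, h2⟩ : E) := by
        have : algebraMap E L (p.eval ⟨α, h2⟩) = 0 := by
          rw [← aeval_algebraMap_apply_eq_algebraMap_eval]; exact hα
        exact (map_eq_zero _).1 this
      have h4 : p.natDegree = 1 := natDegree_eq_of_degree_eq_some
        (degree_eq_one_of_irreducible_of_root hirr h3)
      omega
    obtain ⟨F, hF, e⟩ := lowSq_lift p hp hirr α hα _ hns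
    refine ⟨F, hF, ?_⟩
    rw [minpoly.eq_of_irreducible_of_monic hirr hα hp]
    apply minpoly.dvd
    simp [e]
  obtain ⟨o, h1, h2⟩ := rmax_rc hM
  exact ⟨E, inferInstance, o, inferInstance, h1, h2⟩

end PartD

section PartE
open Polynomial IntermediateField
lemma rc_ivt_monic {R : Type*} [Field R] [LinearOrder R] [IsStrictOrderedRing R] (h : RCFactor R)
    (a b : R) (hab : a ≤ b) : ∀ m : R[X], m.Monic → (∀ r, a ≤ r → r ≤ b → m.eval r ≠ 0) →
      0 < m.eval a * m.eval b := by
  refine rc_induction (P := fun m => (∀ r, a ≤ r → r ≤ b → m.eval r ≠ 0) →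
      0 < m.eval a * m.eval b) h ?_ ?_ ?_
  · simp
  · intro r m _ ih hr
    have h1 := ih (fun s hs hs' h0 => hr s hs hs' (by simp [h0]))
    have h2 : ¬ (a ≤ r ∧ r ≤ b) := fun hh => hr r hh.1 hh.2 (by simp)
    have h3 : 0 < (a - r) * (b - r) := by
      by_cases ha : a ≤ r
      · have : b < r := lt_of_not_ge fun hb => h2 ⟨ha, hb⟩
        exact mul_pos_of_neg_of_neg (by linarith) (by linarith)
      · push Not at ha
        exact mul_pos (by linarith) (by linarith)
    have := mul_pos h3 h1
    simp only [eval_mul, eval_sub, eval_X, eval_C]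
    linarith
  · intro c d m hd _ ih hr
    have h1 := ih (fun s hs hs' h0 => hr s hs hs' (by rw [eval_mul, h0, mul_zero]))
    have := mul_pos (mul_pos (quad_pos c d hd a) (quad_pos c d hd b)) h1
    rw [eval_mul, eval_mul]
    linarith

lemma rc_ivt {R : Type*} [Field R] [LinearOrder R] [IsStrictOrderedRing R] (h : RCFactor R)
    (a b : R) (m : R[X]) (hm : m ≠ 0) (hr : ∀ r, min a b ≤ r → r ≤ max a b → m.eval r ≠ 0) :
      0 < m.eval a * m.eval b := by
  have hl : m.leadingCoeff ≠ 0 := leadingCoeff_ne_zero.2 hm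
  have hm1 : (m * C m.leadingCoeff⁻¹).Monic := monic_mul_leadingCoeff_inv hm
  have key : 0 < (m * C m.leadingCoeff⁻¹).eval (min a b) * (m * C m.leadingCoeff⁻¹).eval (max a b) := by
    refine rc_ivt_monic h _ _ min_le_max _ hm1 ?_
    intro r h1 h2
    simp only [eval_mul, eval_C]
    exact mul_ne_zero (hr r h1 h2) (inv_ne_zero hl)
  simp only [eval_mul, eval_C] at key
  have h2 : 0 < m.eval (min a b) * m.eval (max a b) * (m.leadingCoeff⁻¹) ^ 2 := by linarith
  have h3 := pos_of_mul_pos_left h2 (sq_nonneg _)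
  rcases le_total a b with hab | hab
  · simpa [hab] using h3
  · simp [hab] at h3; linarith

lemma sign_approx {R : Type*} [Field R] [LinearOrder R] [IsStrictOrderedRing R] (h : RCFactor R)
    (k : Subfield R) (hk : ∀ y : R, IsAlgebraic k y → y ∈ k) (x : R) (hx : x ∉ k)
    (G : Finset k[X]) (hG : ∀ g ∈ G, g ≠ 0) :
    ∃ c : k, ∀ g ∈ G, 0 < (aeval x g : R) * (g.eval c : k) := by
  classical
  let S : Finset k := G.biUnion (fun g => g.roots.toFinset)
  obtain ⟨c, h1, h2⟩ := Order.exists_between_finsets (α := k) (S.filter (fun s => (s : R) < x))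
    (S.filter (fun s => x < (s : R))) (by
      intro a ha b hb
      exact (Finset.mem_filter.1 ha).2.trans (Finset.mem_filter.1 hb).2)
  refine ⟨c, fun g hg => ?_⟩
  have hmap : g.map (algebraMap k R) ≠ 0 := (Polynomial.map_ne_zero_iff (algebraMap k R).injective).2 (hG g hg)
  have := rc_ivt h x c (g.map (algebraMap k R)) hmap (by
    intro r hr1 hr2 h0
    rw [eval_map_algebraMap] at h0
    have hrk : r ∈ k := hk r ⟨g, hG g hg, h0⟩
    have hrS : (⟨r, hrk⟩ : k) ∈ S := by
      refine Finset.mem_biUnion.2 ⟨g, hg, ?_⟩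
      rw [Multiset.mem_toFinset, mem_roots (hG g hg), IsRoot.def]
      apply (algebraMap k R).injective
      rw [← aeval_algebraMap_apply_eq_algebraMap_eval, map_zero]; exact h0
    rcases lt_trichotomy r x with hlt | rfl | hlt
    · have : (⟨r, hrk⟩ : k) < c := h1 _ (Finset.mem_filter.2 ⟨hrS, hlt⟩)
      have : r < c := this
      exact absurd hr1 (not_le.2 (lt_min hlt this))
    · exact hx hrk
    · have : c < (⟨r, hrk⟩ : k) := h2 _ (Finset.mem_filter.2 ⟨hrS, hlt⟩)
      have : (c : R) < r := this
      exact absurd hr2 (not_le.2 (max_lt hlt this)))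
  rw [eval_map_algebraMap] at this
  convert this using 2
  have e := aeval_algebraMap_apply_eq_algebraMap_eval (A := R) c g
  rw [eval_map_algebraMap]
  exact e.symm

theorem spec_lemma.{u} {R : Type u} [Field R] [LinearOrder R] [IsStrictOrderedRing R] (h : RCFactor R)
    (k : Subfield R) (hk : ∀ y : R, IsAlgebraic k y → y ∈ k) (x : R) (hx : x ∉ k)
    (T : Finset k⟮x⟯) : ∃ (V : Type u) (_ : CommRing V) (f : V →+* k⟮x⟯) (g : V →+* k)
      (j : k →+* V), Function.Injective f ∧ (∀ a, f (j a) = algebraMap k k⟮x⟯ a) ∧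
      (∀ a, g (j a) = a) ∧ ∀ t ∈ T, ∃ v, f v = t ∧ (0 < (t : R) → 0 < (g v : R)) := by
  classical
  have htr : ∀ q : k[X], q ≠ 0 → (aeval x q : R) ≠ 0 := fun q hq h0 => hx (hk x ⟨q, hq, h0⟩)
  have hfrac : ∀ t : k⟮x⟯, ∃ pq : k[X] × k[X], pq.2 ≠ 0 ∧ (t : R) = aeval x pq.1 / aeval x pq.2 := by
    intro t
    obtain ⟨r, s, hrs⟩ := (mem_adjoin_simple_iff k (t : R)).1 t.2
    by_cases hs : s = 0
    · exact ⟨(0, 1), one_ne_zero, by simp [hrs, hs]⟩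
    · exact ⟨(r, s), hs, hrs⟩
  choose pq hpq0 hpq using hfrac
  let G : Finset k[X] := (T.image (fun t => (pq t).1) ∪ T.image (fun t => (pq t).2)).filter (· ≠ 0)
  obtain ⟨c, hc⟩ := sign_approx h k hk x hx G (fun g hg => (Finset.mem_filter.1 hg).2)
  let M : Submonoid k[X] := (nonZeroDivisors k).comap (evalRingHom c)
  have hM : ∀ q, q ∈ M ↔ q.eval c ≠ 0 := fun q => by
    simp [M]
  let φ : k[X] →+* k⟮x⟯ := (aeval (AdjoinSimple.gen k x)).toRingHom
  have hφ : ∀ q, ((φ q : k⟮x⟯) : R) = aeval x q := by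
    intro q
    have := aeval_algebraMap_apply R (AdjoinSimple.gen k x) q
    exact this.symm
  let ψ : k[X] →+* k := evalRingHom c
  have hφu : ∀ y : M, IsUnit (φ y) := by
    intro y
    rw [isUnit_iff_ne_zero]
    intro h0
    have hy0 : (y : k[X]) ≠ 0 := by
      intro h1; have := (hM y).1 y.2; rw [h1] at this; simp at this
    apply htr _ hy0
    rw [← hφ, h0]; rfl
  have hψu : ∀ y : M, IsUnit (ψ y) := by
    intro y
    rw [isUnit_iff_ne_zero]
    exact (hM y).1 y.2
  have hφinj : Function.Injective φ := by
    rw [injective_iff_map_eq_zero]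
    intro a ha
    by_contra h0
    apply htr _ h0
    rw [← hφ, ha]; rfl
  refine ⟨Localization M, inferInstance, IsLocalization.lift hφu, IsLocalization.lift hψu,
    (algebraMap k[X] (Localization M)).comp C, ?_, ?_, ?_, ?_⟩
  · rw [IsLocalization.lift_injective_iff]
    intro a b
    rw [hφinj.eq_iff]
    refine (IsLocalization.injective (Localization M) (M := M) ?_).eq_iff
    intro q hq
    rw [mem_nonZeroDivisors_iff_ne_zero]
    rintro rfl
    have := (hM _).1 hq
    simp at this
  · intro a
    simp [IsLocalization.lift_eq, φ]
  · intro a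
    simp [IsLocalization.lift_eq, ψ]
  · intro t ht
    have hq : 0 < (aeval x (pq t).2 : R) * ((pq t).2.eval c : k) := hc _ (Finset.mem_filter.2
      ⟨Finset.mem_union_right _ (Finset.mem_image_of_mem _ ht), hpq0 t⟩)
    have hqM : (pq t).2 ∈ M := by
      rw [hM]
      intro h0; rw [h0] at hq; simp at hq
    let v := IsLocalization.mk' (Localization M) (pq t).1 (⟨(pq t).2, hqM⟩ : M)
    have hv : v * algebraMap _ _ (pq t).2 = algebraMap _ _ (pq t).1 :=
      IsLocalization.mk'_spec (Localization M) (pq t).1 (⟨(pq t).2, hqM⟩ : M)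
    have hfv := congrArg (IsLocalization.lift hφu) hv
    have hgv := congrArg (IsLocalization.lift hψu) hv
    rw [map_mul, IsLocalization.lift_eq, IsLocalization.lift_eq] at hfv hgv
    refine ⟨v, ?_, ?_⟩
    · apply Subtype.ext
      rw [hpq t, eq_div_iff (htr _ (hpq0 t)), ← hφ, ← hφ, ← hfv]; rfl
    · intro hpos
      have hp0 : (pq t).1 ≠ 0 := by
        intro h0; rw [hpq t, h0] at hpos; simp at hpos
      have hp : 0 < (aeval x (pq t).1 : R) * ((pq t).1.eval c : k) := hc _ (Finset.mem_filter.2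
        ⟨Finset.mem_union_left _ (Finset.mem_image_of_mem _ ht), hp0⟩)
      have hgv' : ((IsLocalization.lift hψu v : k) : R) * ((pq t).2.eval c : k) = ((pq t).1.eval c : k) := by
        exact_mod_cast congrArg (Subtype.val) hgv
      have ht2 : (t : R) * aeval x (pq t).2 = aeval x (pq t).1 := by
        rw [hpq t, div_mul_cancel₀ _ (htr _ (hpq0 t))]
      rw [← ht2, ← hgv'] at hp
      have : 0 < ((IsLocalization.lift hψu v : k) : R) *
        ((t : R) * ((aeval x (pq t).2 : R) * ((pq t).2.eval c : k))) := by linarith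
      exact pos_of_mul_pos_left this (mul_pos hpos hq).le

end PartE

section PartF
open Polynomial IntermediateField
lemma orth_basis {F : Type*} [Field F] [CharZero F] (m : F[X]) (n : ℕ) :
    ∃ v : Fin n → F[X], (∀ i j, i ≠ j → ptr m (v i * v j) = 0) ∧ (∀ i, (v i).degree < n) ∧
      LinearIndependent F v := by
  let W := degreeLT F n
  haveI : FiniteDimensional F W := Module.Finite.equiv (degreeLTEquiv F n).symm
  have hfr : Module.finrank F W = n := by
    rw [(degreeLTEquiv F n).finrank_eq]; simp
  let B : LinearMap.BilinForm F W := LinearMap.mk₂ F (fun u w => ptr m ((u : F[X]) * (w : F[X])))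
    (by intro a b c; simp [add_mul, ptr_add]) (by intro a b c; simp [ptr_smul])
    (by intro a b c; simp [mul_add, ptr_add]) (by intro a b c; simp [ptr_smul])
  haveI : Invertible (2 : F) := invertibleOfNonzero two_ne_zero
  obtain ⟨v, hv⟩ := LinearMap.BilinForm.exists_orthogonal_basis (B := B) ⟨fun u w => by
    simp [B, mul_comm]⟩
  refine ⟨fun i => (v (Fin.cast hfr.symm i) : F[X]), ?_, ?_, ?_⟩
  · intro i j hij
    have := hv (i := Fin.cast hfr.symm i) (j := Fin.cast hfr.symm j) (by
      intro h; exact hij (by simpa using h))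
    simpa [B, Function.onFun] using this
  · intro i
    exact mem_degreeLT.1 (v (Fin.cast hfr.symm i)).2
  · have h1 := v.linearIndependent.map' (Submodule.subtype W) (Submodule.ker_subtype W)
    exact h1.comp (Fin.cast hfr.symm) (Fin.cast_injective _)

lemma linInd_map {F R : Type*} [Field F] [Field R] (φ : F →+* R) (n : ℕ) (v : Fin n → F[X])
    (hd : ∀ i, (v i).degree < n) (hv : LinearIndependent F v) :
    LinearIndependent R (fun i => (v i).map φ) := by
  let M : Matrix (Fin n) (Fin n) F := fun i j => (v i).coeff j
  have h1 : LinearIndependent F M.row := by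
    rw [Fintype.linearIndependent_iff] at hv ⊢
    intro a ha
    apply hv a
    have hdeg : (∑ i, a i • v i) ∈ degreeLT F n :=
      Submodule.sum_mem _ fun i _ => Submodule.smul_mem _ _ (mem_degreeLT.2 (hd i))
    ext j
    by_cases hj : j < n
    · have := congrFun ha ⟨j, hj⟩
      simpa [M, finsetSum_coeff, Matrix.row, Finset.sum_apply] using this
    · rw [coeff_zero]
      exact coeff_eq_zero_of_degree_lt ((mem_degreeLT.1 hdeg).trans_le (by exact_mod_cast not_lt.1 hj))
  rw [Matrix.linearIndependent_rows_iff_isUnit] at h1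
  have h2 := h1.map φ.mapMatrix
  rw [← Matrix.linearIndependent_rows_iff_isUnit] at h2
  refine LinearIndependent.of_comp (LinearMap.pi fun j : Fin n => lcoeff R j) ?_
  have e : ((LinearMap.pi fun j : Fin n => lcoeff R j) ∘ fun i => (v i).map φ) =
      (φ.mapMatrix M).row := by
    funext i j
    simp [M, Matrix.row]
    rfl
  rw [e]
  exact h2

theorem curve_step.{u} {R : Type u} [Field R] [LinearOrder R] [IsStrictOrderedRing R] (h : RCFactor R)
    (k : Subfield R) (hk : ∀ y : R, IsAlgebraic k y → y ∈ k) (x : R) (hx : x ∉ k)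
    (N : ℕ) (z : Fin N → R) (hz : ∀ i, IsAlgebraic k⟮x⟯ (z i)) :
    ∃ z' : Fin N → k, ∀ P : MvPolynomial (Fin N) k, MvPolynomial.aeval z P = 0 →
      MvPolynomial.aeval z' P = 0 := by
  classical
  let F := k⟮x⟯
  let E := IntermediateField.adjoin F (Set.range z)
  haveI : FiniteDimensional F E := IntermediateField.finiteDimensional_adjoin (by
    rintro _ ⟨i, rfl⟩; exact (hz i).isIntegral)
  obtain ⟨y0, hy0⟩ := Field.exists_primitive_element F E
  let y : R := y0
  have hint0 : IsIntegral F y0 := Algebra.IsIntegral.isIntegral y0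
  have hint : IsIntegral F y := hint0.map (IsScalarTower.toAlgHom F E R)
  have hp : ∀ i, ∃ p : F[X], aeval y p = z i := by
    intro i
    have hmem : z i ∈ E := IntermediateField.subset_adjoin _ _ ⟨i, rfl⟩
    have : (⟨z i, hmem⟩ : E) ∈ Algebra.adjoin F {y0} := by
      rw [← IntermediateField.adjoin_simple_toSubalgebra_of_isAlgebraic hint0.isAlgebraic, hy0]
      trivial
    rw [Algebra.adjoin_singleton_eq_range_aeval] at this
    obtain ⟨p, hp⟩ := this
    refine ⟨p, ?_⟩
    have h1 := aeval_algebraMap_apply R y0 p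
    have h2 : aeval y p = algebraMap E R (aeval y0 p) := h1
    rw [h2]
    exact congrArg (algebraMap E R) hp
  choose p hp using hp
  let m := minpoly F y
  have hm : m.Monic := minpoly.monic hint
  have hsep : m.Separable := (minpoly.irreducible hint).separable
  obtain ⟨v, horth, hdeg, hlin⟩ := orth_basis m m.natDegree
  let T : Finset F := (Finset.range (m.natDegree + 1)).image m.coeff ∪
    (Finset.univ.biUnion fun i => (Finset.range ((v i).natDegree + 1)).image (v i).coeff) ∪
    (Finset.univ.biUnion fun i => (Finset.range ((p i).natDegree + 1)).image (p i).coeff) ∪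
    Finset.univ.image (fun i => ptr m (v i ^ 2))
  obtain ⟨V, _, f, g, j, hinj, hfj, hgj, hT⟩ := spec_lemma h k hk x hx T
  have hlift : ∀ q : F[X], (Finset.range (q.natDegree + 1)).image q.coeff ⊆ T → q ∈ lifts f := by
    intro q hq
    rw [lifts_iff_coeff_lifts]
    intro i
    by_cases hi : i ≤ q.natDegree
    · obtain ⟨w, hw, -⟩ := hT (q.coeff i) (hq (Finset.mem_image_of_mem _ (by simpa [Nat.lt_succ_iff] using hi)))
      exact ⟨w, hw⟩
    · exact ⟨0, by rw [map_zero, coeff_eq_zero_of_natDegree_lt (not_le.1 hi)]⟩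
  obtain ⟨m', hm'f, hm'd, hm'⟩ := lifts_and_natDegree_eq_and_monic (hlift m (by
    intro t ht; simp only [T, Finset.mem_union]; exact Or.inl (Or.inl (Or.inl ht)))) hm
  have hv' : ∀ i, ∃ q, map f q = v i := fun i => (mem_lifts _).1 (hlift (v i) (by
    intro t ht; simp only [T, Finset.mem_union]
    exact Or.inl (Or.inl (Or.inr (Finset.mem_biUnion.2 ⟨i, Finset.mem_univ _, ht⟩)))))
  have hp' : ∀ i, ∃ q, map f q = p i := fun i => (mem_lifts _).1 (hlift (p i) (by
    intro t ht; simp only [T, Finset.mem_union]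
    exact Or.inl (Or.inr (Finset.mem_biUnion.2 ⟨i, Finset.mem_univ _, ht⟩))))
  choose v' hv' using hv'
  choose p' hp' using hp'
  have hptr : ∀ q : V[X], f (ptr m' q) = ptr m (q.map f) := by
    intro q; rw [ptr_map f hm', hm'f]
  let f' : V →+* R := (algebraMap F R).comp f
  let g' : V →+* R := (algebraMap k R).comp g
  have hmf' : ∀ q : V[X], q.map f' = (q.map f).map (algebraMap F R) := fun q => (Polynomial.map_map _ _ _).symm
  have hmg' : ∀ q : V[X], q.map g' = (q.map g).map (algebraMap k R) := fun q => (Polynomial.map_map _ _ _).symm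
  obtain ⟨b, hb⟩ := sig_transfer h f' g' m' hm' m.natDegree hm'd v' (by
      intro a b hab
      apply hinj
      rw [hptr, Polynomial.map_mul, hv', hv', horth a b hab, map_zero])
    (by
      have := linInd_map (algebraMap F R) _ v hdeg hlin
      convert this using 2 with i
      rw [hmf', hv'])
    (by intro i; rw [hmf', hv', degree_map]; exact hdeg i)
    (by rw [hmf', hm'f]; exact hsep.map)
    ⟨y, by rw [hmf', hm'f, IsRoot.def, eval_map_algebraMap]; exact minpoly.aeval F y⟩
    (by
      intro i hi
      have ht : ptr m (v i ^ 2) ∈ T := by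
        simp only [T, Finset.mem_union]
        exact Or.inr (Finset.mem_image_of_mem _ (Finset.mem_univ i))
      obtain ⟨w, hw, hw2⟩ := hT _ ht
      have e : f (ptr m' (v' i ^ 2)) = ptr m (v i ^ 2) := by
        rw [hptr, Polynomial.map_pow, hv']
      have : w = ptr m' (v' i ^ 2) := hinj (by rw [hw, e])
      rw [this] at hw2
      apply hw2
      have : f' (ptr m' (v' i ^ 2)) = algebraMap F R (f (ptr m' (v' i ^ 2))) := rfl
      rw [this, e] at hi
      exact hi)
  rw [hmg', IsRoot.def, eval_map_algebraMap] at hb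
  have hbk : b ∈ k := hk b ⟨_, (hm'.map g).ne_zero, hb⟩
  have hb' : eval₂ g (⟨b, hbk⟩ : k) m' = 0 := by
    rw [← eval_map]
    apply (algebraMap k R).injective
    rw [← aeval_algebraMap_apply_eq_algebraMap_eval, map_zero]; exact hb
  refine ⟨fun i => eval₂ g (⟨b, hbk⟩ : k) (p' i), ?_⟩
  intro P hP
  let Pt : V[X] := MvPolynomial.eval₂ (C.comp j) p' P
  have h1 : eval₂ f' y Pt = 0 := by
    have := MvPolynomial.hom_eval₂ P (C.comp j) (eval₂RingHom f' y) p'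
    rw [coe_eval₂RingHom] at this
    rw [this, ← hP, MvPolynomial.aeval_def]
    congr 1
    · ext a
      simp [f', hfj]
    · funext i
      rw [← hp i, ← hp' i, ← eval_map, hmf', eval_map_algebraMap]
  have h2 : m ∣ Pt.map f := by
    apply minpoly.dvd
    rw [← eval_map_algebraMap, ← hmf', eval_map, h1]
  have h3 : Pt %ₘ m' = 0 := by
    apply map_injective f hinj
    rw [map_modByMonic f hm', hm'f, (modByMonic_eq_zero_iff_dvd hm).2 h2, Polynomial.map_zero]
  obtain ⟨q, hq⟩ := (modByMonic_eq_zero_iff_dvd hm').1 h3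
  have h4 : eval₂ g (⟨b, hbk⟩ : k) Pt = 0 := by
    rw [hq, eval₂_mul, hb', zero_mul]
  have := MvPolynomial.hom_eval₂ P (C.comp j) (eval₂RingHom g (⟨b, hbk⟩ : k)) p'
  rw [coe_eval₂RingHom] at this
  rw [← h4, this, MvPolynomial.aeval_def]
  congr 1
  ext a
  simp [hgj]

end PartF

section PartG
open Polynomial IntermediateField
def RGood {R : Type*} [Field R] [Algebra ℝ R] (k : Subfield R) : Prop :=
  (∀ r : ℝ, algebraMap ℝ R r ∈ k) ∧ (∀ y : R, IsAlgebraic k y → y ∈ k) ∧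
  ∀ (N : ℕ) (z : Fin N → R), (∀ i, z i ∈ k) → ∃ z' : Fin N → ℝ, ∀ P : MvPolynomial (Fin N) ℝ,
    MvPolynomial.aeval z P = 0 → MvPolynomial.aeval z' P = 0

lemma real_closed_in {R : Type*} [Field R] [LinearOrder R] [IsStrictOrderedRing R] [Algebra ℝ R]
    (y : R) (hy : IsAlgebraic ℝ y) : ∃ r, algebraMap ℝ R r = y := by
  have hint := hy.isIntegral
  have hirr := minpoly.irreducible hint
  have hm := minpoly.monic hint
  have h0 := minpoly.aeval ℝ y
  generalize minpoly ℝ y = p at hirr hm h0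
  have hdeg := hirr.natDegree_le_two
  have hpos := hirr.natDegree_pos
  have : p.natDegree = 1 ∨ p.natDegree = 2 := by omega
  rcases this with h | h
  · rw [hm.eq_X_add_C h] at h0
    simp at h0
    exact ⟨- p.coeff 0, by rw [map_neg]; linear_combination -h0⟩
  · exfalso
    have e : p = X ^ 2 + C (p.coeff 1) * X + C (p.coeff 0) := by
      have := p.as_sum_range_C_mul_X_pow
      rw [h] at this
      have hc : p.coeff 2 = 1 := by rw [← h]; exact hm.coeff_natDegree
      simp only [Finset.sum_range_succ, Finset.sum_range_zero, hc] at this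
      rw [this]; simp; ring
    generalize p.coeff 1 = b at e
    generalize p.coeff 0 = c at e
    by_cases hc : 0 < c - (b / 2) ^ 2
    · have hs := Real.mul_self_sqrt hc.le
      have hs0 : Real.sqrt (c - (b / 2) ^ 2) ≠ 0 := (Real.sqrt_pos.2 hc).ne'
      generalize Real.sqrt (c - (b / 2) ^ 2) = s at hs hs0
      have hc' : c = s * s + (b / 2) ^ 2 := by linarith
      have hb' : b = 2 * (b / 2) := by ring
      rw [e, hc'] at h0
      generalize b / 2 = d at h0 hb'
      subst hb'
      simp only [map_add, map_mul, map_pow, aeval_X, aeval_C, map_ofNat] at h0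
      have h1 : (algebraMap ℝ R s) ≠ 0 := (_root_.map_ne_zero _).2 hs0
      have h2 : (y + algebraMap ℝ R d) ^ 2 + algebraMap ℝ R s ^ 2 = 0 := by linear_combination h0
      have : 0 < algebraMap ℝ R s ^ 2 := by positivity
      nlinarith [sq_nonneg (y + algebraMap ℝ R d)]
    · have hs := Real.mul_self_sqrt (show 0 ≤ (b / 2) ^ 2 - c by linarith)
      have hr : p.IsRoot (Real.sqrt ((b / 2) ^ 2 - c) - b / 2) := by
        rw [IsRoot.def, e]; simp; linear_combination hs
      have h1 : p.natDegree = 1 :=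
        natDegree_eq_of_degree_eq_some (degree_eq_one_of_irreducible_of_root hirr hr)
      omega

lemma good_base {R : Type*} [Field R] [LinearOrder R] [IsStrictOrderedRing R] [Algebra ℝ R] :
    RGood (algebraMap ℝ R).fieldRange := by
  refine ⟨fun r => ⟨r, rfl⟩, ?_, ?_⟩
  · rintro y ⟨p, hp0, hp⟩
    have hl : p ∈ lifts (algebraMap ℝ R).rangeRestrictField := by
      rw [lifts_iff_coeff_lifts]
      intro n
      exact (algebraMap ℝ R).rangeRestrictField_bijective.2 _
    obtain ⟨q, hq⟩ := (mem_lifts _).1 hl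
    refine real_closed_in y ⟨q, ?_, ?_⟩
    · rintro rfl; simp at hq; exact hp0 hq.symm
    · rw [← hq, aeval_def, eval₂_map] at hp
      exact hp
  · intro N z hz
    choose z' hz' using hz
    refine ⟨z', fun P hP => ?_⟩
    have : z = fun i => algebraMap ℝ R (z' i) := funext fun i => (hz' i).symm
    rw [this, ← Function.comp_def, MvPolynomial.aeval_algebraMap_apply] at hP
    exact (map_eq_zero _).1 hP

lemma good_step {R : Type*} [Field R] [LinearOrder R] [IsStrictOrderedRing R] [Algebra ℝ R]
    (h : RCFactor R) (k : Subfield R) (hk : RGood k) (x : R) :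
    ∃ k' : Subfield R, RGood k' ∧ k ≤ k' ∧ x ∈ k' := by
  by_cases hx : x ∈ k
  · exact ⟨k, hk, le_rfl, hx⟩
  obtain ⟨hk1, hk2, hk3⟩ := hk
  let F := k⟮x⟯
  let A := algebraicClosure F R
  have hkA : k ≤ A.toSubfield := by
    intro a ha
    have h1 : algebraMap k R ⟨a, ha⟩ ∈ F := IntermediateField.algebraMap_mem F (⟨a, ha⟩ : k)
    have h2 : algebraMap F R ⟨_, h1⟩ ∈ A := IntermediateField.algebraMap_mem A _
    exact h2
  refine ⟨A.toSubfield, ⟨fun r => hkA (hk1 r), ?_, ?_⟩, hkA, ?_⟩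
  · intro y hy
    have hy' : IsAlgebraic A y := hy
    have : IsAlgebraic F y := hy'.restrictScalars F
    exact mem_algebraicClosure_iff.2 this
  · intro N z hz
    obtain ⟨w, hw⟩ := curve_step h k hk2 x hx N z (fun i => mem_algebraicClosure_iff.1 (hz i))
    obtain ⟨z', hz'⟩ := hk3 N (fun i => (w i : R)) (fun i => (w i).2)
    refine ⟨z', fun P hP => hz' P ?_⟩
    let ι : ℝ →+* k := (algebraMap ℝ R).codRestrict k hk1
    have h1 := hw (MvPolynomial.map ι P) (by
      rw [← hP, MvPolynomial.aeval_def, MvPolynomial.eval₂_map]; rfl)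
    have h2 := congrArg (algebraMap k R) h1
    rw [← MvPolynomial.aeval_algebraMap_apply, map_zero, MvPolynomial.aeval_def,
      MvPolynomial.eval₂_map] at h2
    exact h2
  · have h1 : x ∈ F := mem_adjoin_simple_self k x
    have h2 : algebraMap F R ⟨_, h1⟩ ∈ A := IntermediateField.algebraMap_mem A _
    exact h2

theorem real_point {R : Type*} [Field R] [LinearOrder R] [IsStrictOrderedRing R] [Algebra ℝ R]
    [IsRealClosed R] (N : ℕ) (z : Fin N → R) :
    ∃ z' : Fin N → ℝ, ∀ P : MvPolynomial (Fin N) ℝ,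
      MvPolynomial.aeval z P = 0 → MvPolynomial.aeval z' P = 0 := by
  classical
  have key : ∀ s : Finset R, ∃ k : Subfield R, RGood k ∧ ∀ x ∈ s, x ∈ k := by
    intro s
    induction s using Finset.induction_on with
    | empty => exact ⟨_, good_base, by simp⟩
    | insert x s _ ih =>
      obtain ⟨k, hk, hs⟩ := ih
      obtain ⟨k', hk', hle, hx⟩ := good_step (rc_factor R) k hk x
      refine ⟨k', hk', ?_⟩
      intro y hy
      rcases Finset.mem_insert.1 hy with rfl | hy
      · exact hx
      · exact hle (hs y hy)
  obtain ⟨k, hk, hs⟩ := key (Finset.univ.image z)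
  exact hk.2.2 N z (fun i => hs _ (Finset.mem_image_of_mem _ (Finset.mem_univ i)))

end PartG


/-- The null ideal of a functional. -/
def nullIdeal {A : Type*} [CommRing A] [Algebra ℝ A] (L : A →ₗ[ℝ] ℝ) : Ideal A where
  carrier := {a | ∀ b, L (a * b) = 0}
  add_mem' := by intro a b ha hb c; simp [add_mul, ha c, hb c]
  zero_mem' := by intro b; simp
  smul_mem' := by
    intro c a ha b
    have := ha (c * b)
    rw [smul_eq_mul, ← this]; congr 1; ring

lemma mem_nullIdeal {A : Type*} [CommRing A] [Algebra ℝ A] (L : A →ₗ[ℝ] ℝ) (a : A) :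
    a ∈ nullIdeal L ↔ ∀ b, L (a * b) = 0 := Iff.rfl

lemma mem_nullIdeal_of_sq {A : Type*} [CommRing A] [Algebra ℝ A] (L : A →ₗ[ℝ] ℝ)
    (hsq : ∀ a : A, 0 ≤ L (a ^ 2)) (a : A) (ha : L (a ^ 2) = 0) : a ∈ nullIdeal L := by
  intro b
  have h : ∀ t : ℝ, 0 ≤ L (b ^ 2) + 2 * t * L (a * b) := by
    intro t
    have h1 := hsq (b + t • a)
    have h2 : (b + t • a) ^ 2 = b ^ 2 + (2 * t) • (a * b) + (t ^ 2) • a ^ 2 := by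
      simp only [Algebra.smul_def, map_mul, map_pow, map_ofNat]; ring
    rw [h2, map_add, map_add, map_smul, map_smul, ha] at h1
    simpa using h1
  by_contra h0
  have := h (-(L (b ^ 2) + 1) / (2 * L (a * b)))
  have e : 2 * (-(L (b ^ 2) + 1) / (2 * L (a * b))) * L (a * b) = -(L (b ^ 2) + 1) := by
    field_simp
  rw [e] at this
  linarith

/-- The multiplicative set of even powers plus sums of squares. -/
def sqSubmonoid {A : Type*} [CommRing A] (f : A) : Submonoid A where
  carrier := {s | ∃ (k : ℕ) (σ : A), IsSumSq σ ∧ s = f ^ k * f ^ k + σ}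
  one_mem' := ⟨0, 0, .zero, by simp⟩
  mul_mem' := by
    rintro _ _ ⟨k, σ, hσ, rfl⟩ ⟨l, τ, hτ, rfl⟩
    refine ⟨k + l, (f ^ k * f ^ k) * τ + σ * (f ^ l * f ^ l) + σ * τ,
      (((IsSumSq.mul_self _).mul hτ).add (hσ.mul (.mul_self _))).add (hσ.mul hτ), ?_⟩
    ring

lemma mem_sqSubmonoid {A : Type*} [CommRing A] (f s : A) :
    s ∈ sqSubmonoid f ↔ ∃ (k : ℕ) (σ : A), IsSumSq σ ∧ s = f ^ k * f ^ k + σ := Iff.rfl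

lemma sqSubmonoid_add {A : Type*} [CommRing A] (f s τ : A) (hs : s ∈ sqSubmonoid f)
    (hτ : IsSumSq τ) : s + τ ∈ sqSubmonoid f := by
  obtain ⟨k, σ, hσ, rfl⟩ := hs
  exact ⟨k, σ + τ, hσ.add hτ, by ring⟩

lemma exists_real_prime {A : Type*} [CommRing A] (f : A) (N : Ideal A)
    (hN : Disjoint (N : Set A) (sqSubmonoid f)) :
    ∃ p : Ideal A, p.IsPrime ∧ N ≤ p ∧ f ∉ p ∧
      ∀ b σ, IsSumSq σ → b * b + σ ∈ p → b ∈ p := by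
  obtain ⟨p, hNp, hp⟩ := zorn_le_nonempty₀ {J : Ideal A | Disjoint (J : Set A) (sqSubmonoid f)} (by
    intro c hc hchain y hy
    refine ⟨sSup c, ?_, fun z hz => le_sSup hz⟩
    rw [Set.mem_ofPred_eq, Set.disjoint_left]
    intro a ha
    obtain ⟨J, hJ, haJ⟩ := (Submodule.mem_sSup_of_directed ⟨y, hy⟩ hchain.directedOn).1 ha
    exact Set.disjoint_left.1 (hc hJ) haJ) N hN
  have hdis : Disjoint (p : Set A) (sqSubmonoid f) := hp.1
  have hmax : ∀ J : Ideal A, p < J → ¬ Disjoint (J : Set A) (sqSubmonoid f) := by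
    intro J hJ hd
    exact absurd (hp.2 (show J ∈ {J : Ideal A | Disjoint (J : Set A) (sqSubmonoid f)} from hd) hJ.le)
      (not_le_of_gt hJ)
  have hprime := Ideal.isPrime_of_maximally_disjoint p _ hdis hmax
  refine ⟨p, hprime, hNp, ?_, ?_⟩
  · intro hf
    exact Set.disjoint_left.1 hdis (p.mul_mem_left f hf) ⟨1, 0, .zero, by simp⟩
  · intro b σ hσ hb
    by_contra hbp
    have hlt : p < p ⊔ Ideal.span {b} := by
      refine lt_of_le_of_ne le_sup_left ?_
      intro h
      apply hbp
      rw [h]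
      exact Ideal.mem_sup_right (Ideal.mem_span_singleton_self b)
    obtain ⟨s, hs1, hs2⟩ := Set.not_disjoint_iff.1 (hmax _ hlt)
    obtain ⟨q, hq, w, hw, rfl⟩ := Submodule.mem_sup.1 hs1
    obtain ⟨c, rfl⟩ := Ideal.mem_span_singleton'.1 hw
    have h1 : (q + c * b) * (q + c * b) + c * c * σ ∈ sqSubmonoid f :=
      sqSubmonoid_add f _ _ (mul_mem hs2 hs2) ((IsSumSq.mul_self c).mul hσ)
    have h2 : (q + c * b) * (q + c * b) + c * c * σ ∈ p := by
      have e : (q + c * b) * (q + c * b) + c * c * σ = (q + 2 * c * b) * q + c * c * (b * b + σ) := by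
        ring
      rw [e]
      exact p.add_mem (p.mul_mem_left _ hq) (p.mul_mem_left _ hb)
    exact Set.disjoint_left.1 hdis h2 h1

lemma exists_rc_hom.{u} {A : Type u} [CommRing A] (p : Ideal A) (hp : p.IsPrime)
    (hreal : ∀ b σ, IsSumSq σ → b * b + σ ∈ p → b ∈ p) :
    ∃ (R : Type u) (_ : Field R) (_ : LinearOrder R), IsStrictOrderedRing R ∧ IsRealClosed R ∧
      ∃ ρ : A →+* R, ∀ a, ρ a = 0 ↔ a ∈ p := by
  let K := FractionRing (A ⧸ p)
  let φ : A →+* K := (algebraMap (A ⧸ p) K).comp (Ideal.Quotient.mk p)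
  have hφ : ∀ a, φ a = 0 ↔ a ∈ p := by
    intro a
    rw [← Ideal.Quotient.eq_zero_iff_mem]
    exact map_eq_zero_iff _ (IsFractionRing.injective (A ⧸ p) K)
  have hfrac : ∀ t : K, ∃ a b : A, φ b ≠ 0 ∧ t * φ b = φ a := by
    intro t
    obtain ⟨a, b, hb, rfl⟩ := IsFractionRing.div_surjective (A := A ⧸ p) t
    obtain ⟨a, rfl⟩ := Ideal.Quotient.mk_surjective a
    obtain ⟨b, rfl⟩ := Ideal.Quotient.mk_surjective b
    have hb0 : φ b ≠ 0 := by
      rw [ne_eq, hφ, ← Ideal.Quotient.eq_zero_iff_mem]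
      exact nonZeroDivisors.ne_zero hb
    exact ⟨a, b, hb0, div_mul_cancel₀ _ hb0⟩
  have hsum : ∀ t : K, IsSumSq t → ∃ b σ : A, φ b ≠ 0 ∧ IsSumSq σ ∧ t * (φ b * φ b) = φ σ := by
    intro t ht
    induction ht with
    | zero => exact ⟨1, 0, by simp, .zero, by simp⟩
    | sq_add t ht ih =>
      obtain ⟨b, σ, hb, hσ, e⟩ := ih
      obtain ⟨α, β, hβ, e2⟩ := hfrac t
      refine ⟨b * β, (α * b) * (α * b) + (β * β) * σ, by rw [map_mul]; exact mul_ne_zero hb hβ,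
        .sq_add _ ((IsSumSq.mul_self _).mul hσ), ?_⟩
      simp only [map_add, map_mul, ← e, ← e2]
      ring
  have hK : ¬ IsSumSq (-1 : K) := by
    intro h
    obtain ⟨b, σ, hb, hσ, e⟩ := hsum _ h
    apply hb
    rw [hφ]
    apply hreal b σ hσ
    rw [← hφ, map_add, map_mul, ← e]
    ring
  obtain ⟨R, i1, i2, i3, h1, h2⟩ := exists_rc hK
  refine ⟨R, i1, i2, h1, h2, (algebraMap K R).comp φ, ?_⟩
  intro a
  rw [← hφ]
  exact map_eq_zero_iff _ (algebraMap K R).injective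

lemma exists_character {A : Type*} [CommRing A] [Algebra ℝ A] (hfg : Algebra.FiniteType ℝ A)
    (p : Ideal A) (hp : p.IsPrime) (hreal : ∀ b σ, IsSumSq σ → b * b + σ ∈ p → b ∈ p)
    (f : A) (hf : f ∉ p) : ∃ χ : A →ₐ[ℝ] ℝ, (∀ b ∈ p, χ b = 0) ∧ χ f ≠ 0 := by
  obtain ⟨R, i1, i2, i3, i4, ρ, hρ⟩ := exists_rc_hom p hp hreal
  letI : Algebra ℝ R := (ρ.comp (algebraMap ℝ A)).toAlgebra
  let ρ' : A →ₐ[ℝ] R := { ρ with commutes' := fun r => rfl }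
  have hρ' : ∀ a, ρ' a = 0 ↔ a ∈ p := hρ
  obtain ⟨n, π, hπ⟩ := Algebra.FiniteType.iff_quotient_mvPolynomial''.1 hfg
  obtain ⟨z', hz'⟩ := real_point (n + 1)
    (Fin.cons (ρ' f)⁻¹ (fun i => ρ' (π (MvPolynomial.X i))) : Fin (n + 1) → R)
  have hev : ∀ P : MvPolynomial (Fin n) ℝ, MvPolynomial.aeval
      (Fin.cons (ρ' f)⁻¹ (fun i => ρ' (π (MvPolynomial.X i))) : Fin (n + 1) → R)
        (MvPolynomial.rename Fin.succ P) = ρ' (π P) := by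
    intro P
    rw [MvPolynomial.aeval_rename]
    have : MvPolynomial.aeval ((Fin.cons (ρ' f)⁻¹ (fun i => ρ' (π (MvPolynomial.X i))) :
        Fin (n + 1) → R) ∘ Fin.succ) = ρ'.comp π := by
      apply MvPolynomial.algHom_ext
      intro i
      simp
    rw [this]; rfl
  let θ : MvPolynomial (Fin n) ℝ →ₐ[ℝ] ℝ := MvPolynomial.aeval (z' ∘ Fin.succ)
  have hθ : ∀ P, π P ∈ p → θ P = 0 := by
    intro P hP
    have := hz' (MvPolynomial.rename Fin.succ P) (by rw [hev, hρ']; exact hP)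
    rwa [MvPolynomial.aeval_rename] at this
  let χ : A →ₐ[ℝ] ℝ := AlgHom.liftOfSurjective π hπ θ (by
    intro P hP
    have h0 : π P = 0 := hP
    exact hθ P (by rw [h0]; exact p.zero_mem))
  have hχ : ∀ P, χ (π P) = θ P := fun P => AlgHom.liftOfSurjective_apply π hπ θ _ P
  refine ⟨χ, ?_, ?_⟩
  · intro b hb
    obtain ⟨P, rfl⟩ := hπ b
    rw [hχ]; exact hθ P hb
  · obtain ⟨Q, hQ⟩ := hπ f
    have h0 : ρ' f ≠ 0 := fun h => hf ((hρ' f).1 h)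
    have := hz' (MvPolynomial.X 0 * MvPolynomial.rename Fin.succ Q - 1) (by
      rw [map_sub, map_mul, hev, hQ, MvPolynomial.aeval_X, Fin.cons_zero, inv_mul_cancel₀ h0]
      simp)
    rw [map_sub, map_mul, MvPolynomial.aeval_rename, MvPolynomial.aeval_X, map_one] at this
    intro h
    rw [← hQ, hχ] at h
    have h' : MvPolynomial.aeval (z' ∘ Fin.succ) Q = 0 := h
    rw [h'] at this
    simp at this

/-- **Positive functionals vanishing on an ideal vanish on its "character
radical".**  Let `A` be a finitely generated commutative real unital algebra,
`I` an ideal of `A`, and `L` a linear functional on `A` that is nonnegative on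
all squares and vanishes on `I`.  If `f ∈ A` is annihilated by every character
of `A` (unital `ℝ`-algebra homomorphism `A → ℝ`) vanishing on `I`, then
`L f = 0`.  In particular `L` vanishes on the ideal
`Î = {f : χ f = 0 for every character χ vanishing on I}`. -/
theorem positive_functional_vanishes_on_character_radical
    {A : Type*} [CommRing A] [Algebra ℝ A] (hfg : Algebra.FiniteType ℝ A)
    (I : Ideal A) (L : A →ₗ[ℝ] ℝ)
    (hsq : ∀ a : A, 0 ≤ L (a ^ 2)) (hI : ∀ b ∈ I, L b = 0)
    (f : A) (hf : ∀ χ : A →ₐ[ℝ] ℝ, (∀ b ∈ I, χ b = 0) → χ f = 0) :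
    L f = 0 := by
  by_contra hLf
  have hfN : f ∉ nullIdeal L := fun h => hLf (by simpa using h 1)
  have hrad : (nullIdeal L).IsRadical := by
    rw [Ideal.isRadical_iff_pow_one_lt 2 one_lt_two]
    intro r hr
    exact mem_nullIdeal_of_sq L hsq r (by simpa using hr 1)
  have hpos : ∀ σ : A, IsSumSq σ → 0 ≤ L σ := by
    intro σ hσ
    induction hσ with
    | zero => simp
    | sq_add a _ ih =>
      have := hsq a
      rw [map_add, ← sq]; linarith
  have hdis : Disjoint (nullIdeal L : Set A) (sqSubmonoid f) := by
    rw [Set.disjoint_left]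
    rintro _ hs ⟨k, σ, hσ, rfl⟩
    have h1 : L (f ^ k * f ^ k + σ) = 0 := by
      have := (mem_nullIdeal L _).1 hs 1
      rwa [mul_one] at this
    rw [map_add, ← sq] at h1
    have h2 := hsq (f ^ k)
    have h3 := hpos σ hσ
    have h4 : f ^ k ∈ nullIdeal L := mem_nullIdeal_of_sq L hsq _ (by linarith)
    exact hfN (hrad ⟨k, h4⟩)
  obtain ⟨p, hp, hNp, hfp, hreal⟩ := exists_real_prime f (nullIdeal L) hdis
  obtain ⟨χ, hχ, hχf⟩ := exists_character hfg p hp hreal f hfp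
  refine hχf (hf χ fun b hb => hχ b (hNp ?_))
  intro c
  exact hI _ (I.mul_mem_right c hb)
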